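/- arXiv:1406.1121 — 14 statements merged into one kernel-verified Lean document; each statement's English description precedes it below -/
import Mathlib

section
/- Let K be an idempotent semifield (a commutative semifield in which x + x = x for all x). If x, y ∈ K and n is a positive integer such that x^n + y^n = y^n, then x + y = y. -/
theorem md_expand {K : Type*} [Semifield K] (hK : ∀ x : K, x + x = x)
    (x y : K) (m : ℕ) : (x + y) ^ (m + 1) = x ^ (m + 1) + y * (x + y) ^ m := by
  induction m with
  | zero => simp
  | succ m ih =>
    have h1 : y * (x + y) ^ (m + 1) = y * x ^ (m + 1) + y * (x + y) ^ (m + 1) := by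
      rw [ih, mul_add, ← add_assoc, hK]
    calc (x + y) ^ (m + 1 + 1) = x * (x + y) ^ (m + 1) + y * (x + y) ^ (m + 1) := by ring
      _ = x * (x ^ (m + 1) + y * (x + y) ^ m) + y * (x + y) ^ (m + 1) := by rw [← ih]
      _ = x ^ (m + 1 + 1) + (x * y * (x + y) ^ m + y * (x + y) * (x + y) ^ m) := by ring
      _ = x ^ (m + 1 + 1) + ((x * y * (x + y) ^ m + x * y * (x + y) ^ m)
            + y * y * (x + y) ^ m) := by ring
      _ = x ^ (m + 1 + 1) + y * (x + y) ^ (m + 1) := by rw [hK]; ring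

theorem md_absorb {K : Type*} [Semifield K] (hK : ∀ x : K, x + x = x)
    (x y : K) (m : ℕ) : y ^ m + (x + y) ^ m = (x + y) ^ m := by
  cases m with
  | zero => simp [hK]
  | succ m => rw [add_comm x y, md_expand hK y x m, ← add_assoc, hK]

/-- Let `K` be an idempotent semifield (a commutative semifield in which `x + x = x` for all
`x`). If `x, y ∈ K` and `n` is a positive integer such that `x ^ n + y ^ n = y ^ n`, then
`x + y = y`. -/
theorem monotonic_division {K : Type*} [Semifield K] (hK : ∀ x : K, x + x = x)
    (x y : K) (n : ℕ) (hn : 0 < n) (h : x ^ n + y ^ n = y ^ n) : x + y = y := by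
  obtain ⟨m, rfl⟩ : ∃ m, n = m + 1 := ⟨n - 1, by omega⟩
  by_cases h0 : x + y = 0
  · have h1 : x + (y + y) = y := by rw [← add_assoc, h0, zero_add]
    rwa [hK] at h1
  · have key : (x + y) * (x + y) ^ m = y * (x + y) ^ m := by
      have e : y * (x + y) ^ m = y ^ (m + 1) + y * (x + y) ^ m := by
        conv_lhs => rw [← md_absorb hK x y m]
        rw [mul_add, pow_succ' y m]
      rw [← pow_succ', md_expand hK x y m, e, ← add_assoc, h]
    exact mul_right_cancel₀ (pow_ne_zero m h0) key
end

section
/- Let K be an idempotent semifield and let x ∈ K satisfy x^n = 1 for some positive integer n. Then x = 1. (Equivalently, the group of units of an idempotent semifield is torsion-free.) -/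
/-- Let `K` be an idempotent semifield and let `x ∈ K` satisfy `x ^ n = 1` for some positive
integer `n`. Then `x = 1`. -/
theorem roots_of_unity_trivial {K : Type*} [Semifield K] (hK : ∀ x : K, x + x = x)
    (x : K) (n : ℕ) (hn : 0 < n) (h : x ^ n = 1) : x = 1 := by
  obtain ⟨m, rfl⟩ : ∃ m, n = m + 1 := ⟨n - 1, by omega⟩
  obtain ⟨r, hr⟩ : ∃ r, r = ∑ i ∈ Finset.range m, x ^ (i + 1) := ⟨_, rfl⟩
  obtain ⟨s, hs⟩ : ∃ s, s = ∑ i ∈ Finset.range (m + 1), x ^ i := ⟨_, rfl⟩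
  have h1 : s = r + 1 := by rw [hs, hr, Finset.sum_range_succ', pow_zero]
  have h2 : x * s = s := by
    have : x * s = ∑ i ∈ Finset.range (m + 1), x ^ (i + 1) := by
      rw [hs, Finset.mul_sum]
      exact Finset.sum_congr rfl fun i _ => (pow_succ' x i).symm
    rw [this, Finset.sum_range_succ, h, ← hr, h1]
  have h3 : s ≠ 0 := by
    intro h0
    have h4 : s + 1 = s := by rw [h1, add_assoc, hK]
    rw [h0, zero_add] at h4
    exact one_ne_zero h4
  exact mul_right_cancel₀ h3 (by rw [h2, one_mul])
end

section
/- Let L be an idempotent semifield whose additive monoid is finitely generated (i.e., there is a finite subset S ⊆ L such that every element of L is a finite sum of elements of S; equivalently, L is a finitely generated semimodule over its prime subsemifield 𝔹 = {0,1}). Then every element of L equals 0 or 1, i.e., L = 𝔹. -/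
/-- Let `L` be an idempotent semifield whose additive monoid is finitely generated, i.e. there is
a finite subset `S ⊆ L` such that every element of `L` is a finite sum of elements of `S`.
Then every element of `L` equals `0` or `1`, i.e. `L = 𝔹`. -/
theorem finite_extension_of_bool {L : Type*} [Semifield L] (hL : ∀ x : L, x + x = x)
    (hfg : ∃ S : Finset L, ∀ x : L, x ∈ AddSubmonoid.closure (S : Set L)) :
    ∀ x : L, x = 0 ∨ x = 1 := by
  classical
  obtain ⟨S, hS⟩ := hfg
  obtain ⟨t, ht⟩ : ∃ t : L, ∀ x : L, x + t = t := by
    refine ⟨∑ s ∈ S, s, fun x => ?_⟩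
    induction hS x using AddSubmonoid.closure_induction with
    | mem y hy =>
      rw [← Finset.add_sum_erase S (fun s => s) (Finset.mem_coe.mp hy), ← add_assoc, hL]
    | zero => exact zero_add _
    | add a b _ _ ha hb => rw [add_assoc, hb, ha]
  have ht0 : t ≠ 0 := by
    intro h
    have h1 := ht 1
    rw [h, add_zero] at h1
    exact one_ne_zero h1
  have htt : t * t = t := by
    have h1 := ht (t * t)
    have h2 : t * (1 + t) = t * t := by rw [ht 1]
    rw [mul_add, mul_one, add_comm, h1] at h2
    exact h2.symm
  have ht1 : t = 1 := mul_left_cancel₀ ht0 (by rw [htt, mul_one])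
  subst ht1
  intro x
  by_cases hx : x = 0
  · exact Or.inl hx
  · right
    have h : x * (x⁻¹ + 1) = x * 1 := by rw [ht]
    rw [mul_add, mul_inv_cancel₀ hx, mul_one, add_comm, ht] at h
    exact h.symm
end

section
/- Let L be a selective idempotent semifield and f : ℤ_max →+* L an injective semiring homomorphism such that L is a finite extension of ℤ_max via f (i.e., there is a finite subset S ⊆ L such that every element of L is a finite sum of elements of the form f(a) * s with a ∈ ℤ_max, s ∈ S). Then the subgroup Z(f) := {w ∈ Lˣ : ∃ a : ℤ, (w : L) = f (trop a)} has finite index in the group of units Lˣ. -/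
open Tropical

/-- The subgroup `Z(f)` of `Lˣ` consisting of units lying in the image under `f` of the
nonzero elements of `ℤ_max = Tropical (WithTop ℤ)`. -/
def tropUnitSubgroup {L : Type*} [DivisionSemiring L]
    (f : Tropical (WithTop ℤ) →+* L) : Subgroup Lˣ where
  carrier := {w : Lˣ | ∃ a : ℤ, (w : L) = f (trop (a : WithTop ℤ))}
  one_mem' := ⟨0, by simp⟩
  mul_mem' := by
    rintro v w ⟨a, ha⟩ ⟨b, hb⟩
    refine ⟨a + b, ?_⟩
    rw [Units.val_mul, ha, hb, ← map_mul, ← Tropical.trop_add, ← WithTop.coe_add]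
  inv_mem' := by
    rintro w ⟨a, ha⟩
    refine ⟨-a, Units.inv_eq_of_mul_eq_one_right ?_⟩
    have h1 : trop ((a : WithTop ℤ)) * trop (((-a : ℤ) : WithTop ℤ)) = 1 := by
      rw [← Tropical.trop_add, ← WithTop.coe_add, add_neg_cancel, WithTop.coe_zero,
        Tropical.trop_zero]
    rw [ha, ← map_mul, h1, map_one]

/-- Let `L` be a selective idempotent semifield and `f : ℤ_max →+* L` an injective semiring
homomorphism such that `L` is a finite extension of `ℤ_max` via `f` (there is a finite subset
`S ⊆ L` such that every element of `L` is a finite sum of elements of the form `f a * s` with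
`a ∈ ℤ_max`, `s ∈ S`).  Then the subgroup `Z(f)` has finite index in `Lˣ`. -/
theorem selective_finite_extension_finite_unit_index {L : Type*} [Semifield L]
    (hidem : ∀ x : L, x + x = x)
    (hsel : ∀ x y : L, x + y = x ∨ x + y = y)
    (f : Tropical (WithTop ℤ) →+* L) (hf : Function.Injective f)
    (hfin : ∃ S : Finset L, ∀ x : L,
      x ∈ AddSubmonoid.closure {y : L | ∃ a : Tropical (WithTop ℤ), ∃ s ∈ S, y = f a * s}) :
    (tropUnitSubgroup f).FiniteIndex := by
  obtain ⟨S, hS⟩ := hfin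
  have key : ∀ x : L, x = 0 ∨ ∃ a : Tropical (WithTop ℤ), ∃ s ∈ S, x = f a * s := by
    intro x
    induction hS x using AddSubmonoid.closure_induction with
    | mem x hx => exact Or.inr hx
    | zero => exact Or.inl rfl
    | add x y _ _ hx hy =>
      rcases hsel x y with h | h
      · rw [h]; exact hx
      · rw [h]; exact hy
  classical
  let g : S → Lˣ ⧸ tropUnitSubgroup f := fun s =>
    if h : (s : L) = 0 then QuotientGroup.mk 1 else QuotientGroup.mk (Units.mk0 (s : L) h)
  have hg : Function.Surjective g := by
    intro q
    obtain ⟨w, rfl⟩ := QuotientGroup.mk_surjective q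
    rcases key (w : L) with h | ⟨a, s, hs, h⟩
    · exact absurd h w.ne_zero
    · have hs0 : s ≠ 0 := by
        rintro rfl
        exact w.ne_zero (by rw [h, mul_zero])
      refine ⟨⟨s, hs⟩, ?_⟩
      simp only [g, dif_neg hs0]
      rw [QuotientGroup.eq]
      have ha : untrop a ≠ ⊤ := by
        intro ha
        have h0 : a = 0 := Tropical.untrop_injective ha
        exact w.ne_zero (by rw [h, h0, map_zero, zero_mul])
      obtain ⟨n, hn⟩ := WithTop.ne_top_iff_exists.mp ha
      refine ⟨n, ?_⟩
      rw [hn, Tropical.trop_untrop, Units.val_mul, h, Units.val_inv_eq_inv_val, Units.val_mk0]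
      field_simp
  have : Finite (Lˣ ⧸ tropUnitSubgroup f) := Finite.of_surjective g hg
  exact Subgroup.finiteIndex_of_finite_quotient
end

section
/- Let M be a torsion-free additive abelian group, let g ∈ M be a nonzero element, and let Z = ℤ∙g be the infinite cyclic subgroup generated by g. Then for each positive integer n, the quotient group M/Z has at most one subgroup of order n, and every finite subgroup of M/Z is cyclic. -/
/-- The `m`-torsion of `M ⧸ ℤ∙g` injects into `ZMod m`. -/
lemma torsion_inj {M : Type*} [AddCommGroup M]
    (htf : ∀ (x : M) (k : ℕ), 0 < k → k • x = 0 → x = 0) (g : M) (m : ℕ) (hm : 0 < m) :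
    ∃ f : {q : M ⧸ AddSubgroup.zmultiples g // m • q = 0} → ZMod m, Function.Injective f := by
  have key : ∀ q : {q : M ⧸ AddSubgroup.zmultiples g // m • q = 0},
      ∃ (x : M) (a : ℤ), (QuotientAddGroup.mk x : M ⧸ AddSubgroup.zmultiples g) = q.1 ∧
        a • g = m • x := by
    rintro ⟨q, hq⟩
    obtain ⟨x, rfl⟩ := QuotientAddGroup.mk_surjective q
    rw [← QuotientAddGroup.mk_nsmul, QuotientAddGroup.eq_zero_iff,
      AddSubgroup.mem_zmultiples_iff] at hq
    obtain ⟨a, ha⟩ := hq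
    exact ⟨x, a, rfl, ha⟩
  choose x a hx ha using key
  refine ⟨fun q => (a q : ZMod m), fun p q h => ?_⟩
  obtain ⟨c, hc⟩ := (ZMod.intCast_eq_intCast_iff_dvd_sub _ _ _).1 h
  have h1 : -x p + x q - c • g = 0 := by
    apply htf _ m hm
    have h2 : (a q - a p) • g = ((m : ℤ) * c) • g := by rw [hc]
    rw [sub_smul, ha, ha, mul_smul, natCast_zsmul] at h2
    rw [smul_sub, smul_add, smul_neg, ← h2]
    abel
  apply Subtype.ext
  rw [← hx p, ← hx q, QuotientAddGroup.eq, AddSubgroup.mem_zmultiples_iff]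
  exact ⟨c, (sub_eq_zero.1 h1).symm⟩

/-- Let `M` be a torsion-free additive abelian group, `g ∈ M` a nonzero element, and
`Z = ℤ ∙ g` the (infinite cyclic) subgroup generated by `g`.  Then for each positive integer
`n`, the quotient group `M ⧸ Z` has at most one subgroup of order `n`, and every finite
subgroup of `M ⧸ Z` is cyclic. -/
theorem quotient_by_cyclic_at_most_one_subgroup {M : Type*} [AddCommGroup M]
    (htf : ∀ (x : M) (k : ℕ), 0 < k → k • x = 0 → x = 0)
    (g : M) (hg : g ≠ 0) (n : ℕ) (hn : 0 < n) :
    (∀ H₁ H₂ : AddSubgroup (M ⧸ AddSubgroup.zmultiples g),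
        Nat.card H₁ = n → Nat.card H₂ = n → H₁ = H₂) ∧
      (∀ H : AddSubgroup (M ⧸ AddSubgroup.zmultiples g), Finite H → IsAddCyclic H) := by
  classical
  constructor
  · have main : ∀ H : AddSubgroup (M ⧸ AddSubgroup.zmultiples g), Nat.card H = n →
        (H : Set (M ⧸ AddSubgroup.zmultiples g)) = {q | n • q = 0} := by
      intro H hH
      obtain ⟨f, hf⟩ := torsion_inj htf g n hn
      have : NeZero n := ⟨hn.ne'⟩
      have hfin : Finite {q : M ⧸ AddSubgroup.zmultiples g // n • q = 0} :=
        Finite.of_injective f hf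
      have hcard := Nat.card_le_card_of_injective f hf
      rw [Nat.card_zmod] at hcard
      apply Set.eq_of_subset_of_ncard_le (ht := hfin)
      · intro q hq
        have := card_nsmul_eq_zero' (x := (⟨q, hq⟩ : H))
        rw [hH] at this
        exact congrArg Subtype.val this
      · exact hcard.trans hH.ge
    intro H₁ H₂ h₁ h₂
    exact SetLike.coe_injective ((main H₁ h₁).trans (main H₂ h₂).symm)
  · intro H hH
    have := Fintype.ofFinite H
    apply isAddCyclic_of_card_nsmul_eq_zero_le
    intro m hm
    obtain ⟨f, hf⟩ := torsion_inj htf g m hm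
    have : NeZero m := ⟨hm.ne'⟩
    have hz : (Finset.univ : Finset (ZMod m)).card = m := by
      rw [Finset.card_univ, ZMod.card]
    refine le_trans (Finset.card_le_card_of_injOn (t := (Finset.univ : Finset (ZMod m)))
      (fun q => if h : m • (q : M ⧸ AddSubgroup.zmultiples g) = 0 then f ⟨q, h⟩ else 0)
      (fun _ _ => Finset.mem_coe.2 (Finset.mem_univ _)) ?_) hz.le
    intro p hp q hq h
    have hp' : m • (p : M ⧸ AddSubgroup.zmultiples g) = 0 :=
      congrArg Subtype.val (Finset.mem_filter.1 hp).2
    have hq' : m • (q : M ⧸ AddSubgroup.zmultiples g) = 0 :=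
      congrArg Subtype.val (Finset.mem_filter.1 hq).2
    simp only [hp', hq', dif_pos] at h
    have h3 := hf h
    exact Subtype.ext (Subtype.mk.inj h3)
end

section
/- Let L be a subsemiring of the tropical real semifield ℝ_max = Tropical (WithTop ℝ) which contains the image of ℤ_max = Tropical (WithTop ℤ) (embedded via the coercion ℤ → ℝ), is closed under inverses of its nonzero elements, and is finitely generated as a semimodule over ℤ_max (i.e., there is a finite subset S ⊆ L such that every element of L is a finite sum of elements a * s with a in the image of ℤ_max and s ∈ S). Then there exists a positive integer n such that L = {0} ∪ {trop (a / n) : a ∈ ℤ}, the subsemifield corresponding to the subgroup (1/n)ℤ ⊆ ℝ. -/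
open Tropical

theorem closure_aux (T : Set (Tropical (WithTop ℝ))) (x : Tropical (WithTop ℝ))
    (hx : x ∈ AddSubmonoid.closure T) : x = 0 ∨ x ∈ T := by
  induction hx using AddSubmonoid.closure_induction with
  | mem x h => exact Or.inr h
  | zero => exact Or.inl rfl
  | add x y _ _ h1 h2 =>
    rcases le_total x y with h | h
    · rw [Tropical.add_eq_left h]; exact h1
    · rw [Tropical.add_eq_right h]; exact h2

/-- Let `L` be a subsemiring of the tropical real semifield `ℝ_max = Tropical (WithTop ℝ)`
which contains the image of `ℤ_max = Tropical (WithTop ℤ)`, is closed under inverses of its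
nonzero elements, and is finitely generated as a semimodule over `ℤ_max`.  Then there is a
positive integer `n` such that `L = {0} ∪ {trop (a / n) : a ∈ ℤ}`, the subsemifield
corresponding to the subgroup `(1/n)ℤ ⊆ ℝ`. -/
theorem finite_subextension_of_Rmax (L : Subsemiring (Tropical (WithTop ℝ)))
    (hZ : ∀ a : ℤ, trop ((a : ℝ) : WithTop ℝ) ∈ L)
    (hinv : ∀ x ∈ L, x ≠ 0 → x⁻¹ ∈ L)
    (hfin : ∃ S : Finset (Tropical (WithTop ℝ)), ↑S ⊆ (L : Set (Tropical (WithTop ℝ))) ∧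
      ∀ x ∈ L, x ∈ AddSubmonoid.closure
        {y : Tropical (WithTop ℝ) | ∃ (a : WithTop ℤ), ∃ s ∈ S,
          y = trop (a.map (fun z : ℤ => (z : ℝ))) * s}) :
    ∃ n : ℕ, 0 < n ∧ (L : Set (Tropical (WithTop ℝ))) =
      {0} ∪ {x | ∃ a : ℤ, x = trop (((a : ℝ) / (n : ℝ)) : WithTop ℝ)} := by
  obtain ⟨S, -, hS⟩ := hfin
  have hne : ∀ r : ℝ, trop (r : WithTop ℝ) ≠ 0 := fun r h => by
    have := congrArg untrop h
    simp at this
  let G : AddSubgroup ℝ :=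
    { carrier := {r | trop (r : WithTop ℝ) ∈ L}
      zero_mem' := by simpa using hZ 0
      add_mem' := by
        intro a b ha hb
        have := L.mul_mem ha hb
        rwa [← trop_add, ← WithTop.coe_add] at this
      neg_mem' := by
        intro a ha
        exact hinv _ ha (hne a) }
  have hG : ∀ r, r ∈ G ↔ trop (r : WithTop ℝ) ∈ L := fun r => Iff.rfl
  have h1 : (1 : ℝ) ∈ G := by simpa [hG] using hZ 1
  have hF : ({r : ℝ | r ∈ G ∧ 0 < r ∧ r ≤ 1}).Finite := by
    refine (S.finite_toSet.image (fun s => (untrop s).untopD (0 : ℝ) - (⌈(untrop s).untopD (0 : ℝ)⌉ : ℝ) + 1)).subset ?_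
    rintro r ⟨hr, h0, hr1⟩
    rcases closure_aux _ _ (hS _ hr) with h | ⟨a, s, hs, h⟩
    · exact absurd h (hne r)
    · refine ⟨s, hs, ?_⟩
      have h := congrArg untrop h
      rw [untrop_mul, untrop_trop, untrop_trop] at h
      beta_reduce
      generalize untrop s = t at h ⊢
      induction a with
      | top => simp at h
      | coe z =>
        induction t with
        | top => simp at h
        | coe t =>
          rw [WithTop.map_coe, ← WithTop.coe_add, WithTop.coe_inj] at h
          have : ⌈t⌉ = 1 - z := by
            rw [Int.ceil_eq_iff]; push_cast
            constructor <;> linarith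
          simp only [WithTop.untopD_coe, this]
          push_cast
          linarith
  obtain ⟨m, ⟨hmG, hm0, hm1⟩, hmin⟩ := Set.exists_min_image _ id hF ⟨1, h1, one_pos, le_rfl⟩
  have hcyc : G = AddSubgroup.closure {m} := by
    apply AddSubgroup.cyclic_of_min
    refine ⟨⟨hmG, hm0⟩, ?_⟩
    rintro r ⟨hr, h0⟩
    by_cases h : r ≤ 1
    · exact hmin r ⟨hr, h0, h⟩
    · linarith
  have hmem : ∀ r, r ∈ G ↔ ∃ k : ℤ, k * m = r := fun r => by
    rw [hcyc, AddSubgroup.mem_closure_singleton]; simp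
  obtain ⟨k, hk⟩ := (hmem 1).1 h1
  have hk0 : 0 < k := by
    by_contra h
    have : (k : ℝ) ≤ 0 := by exact_mod_cast not_lt.1 h
    nlinarith
  lift k to ℕ using hk0.le
  have hk0' : 0 < k := by exact_mod_cast hk0
  have hkr : (0 : ℝ) < k := by exact_mod_cast hk0'
  have hm : m = 1 / k := by
    push_cast at hk
    field_simp; linarith
  refine ⟨k, hk0', ?_⟩
  ext x
  simp only [Set.mem_union, Set.mem_singleton_iff, Set.mem_setOf_eq, SetLike.mem_coe]
  constructor
  · intro hx
    induction x using Tropical.tropRec with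
    | _ x =>
    induction x with
    | top => exact Or.inl rfl
    | coe r =>
      obtain ⟨a, ha⟩ := (hmem r).1 hx
      refine Or.inr ⟨a, ?_⟩
      rw [← ha, hm, mul_one_div]
  · rintro (rfl | ⟨a, rfl⟩)
    · exact L.zero_mem
    · refine (hG _).1 ((hmem _).2 ⟨a, ?_⟩)
      rw [hm, mul_one_div]
end

section
/- Let L be an idempotent semifield and f : ℤ_max →+* L an injective semiring homomorphism which is archimedean (for every x ∈ L there exists y ∈ ℤ_max with x + f y = f y) and finite (there is a finite subset S ⊆ L such that every element of L is a finite sum of elements of the form f(a) * s with a ∈ ℤ_max, s ∈ S). Then the subgroup Z(f) := {w ∈ Lˣ : ∃ a : ℤ, (w : L) = f (trop a)} has finite index in Lˣ. -/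
open Tropical

theorem idem_closure_finite {L : Type*} [AddCommMonoid L] (hidem : ∀ x : L, x + x = x)
    (P : Finset L) : ((AddSubmonoid.closure (P : Set L) : AddSubmonoid L) : Set L).Finite := by
  classical
  have hun : ∀ T T' : Finset L, ∑ i ∈ T ∪ T', i = ∑ i ∈ T, i + ∑ i ∈ T', i := by
    intro T T'
    induction T using Finset.induction_on with
    | empty => simp
    | insert a T ha ih =>
      rw [Finset.insert_union, Finset.sum_insert ha]
      by_cases h : a ∈ T ∪ T'
      · rw [Finset.insert_eq_of_mem h, add_assoc, ← ih]
        rw [← Finset.add_sum_erase _ _ h, ← add_assoc, hidem]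
      · rw [Finset.sum_insert h, ih, add_assoc]
  refine (P.powerset.image (fun T => ∑ i ∈ T, i)).finite_toSet.subset ?_
  intro x hx
  induction hx using AddSubmonoid.closure_induction with
  | mem x hx =>
    simp only [Finset.coe_image, Set.mem_image, Finset.mem_coe, Finset.mem_powerset]
    exact ⟨{x}, by simpa using hx, by simp⟩
  | zero =>
    simp only [Finset.coe_image, Set.mem_image, Finset.mem_coe, Finset.mem_powerset]
    exact ⟨∅, by simp, by simp⟩
  | add x y _ _ hx hy =>
    simp only [Finset.coe_image, Set.mem_image, Finset.mem_coe, Finset.mem_powerset] at *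
    obtain ⟨T, hT, rfl⟩ := hx
    obtain ⟨T', hT', rfl⟩ := hy
    exact ⟨T ∪ T', Finset.union_subset hT hT', hun T T'⟩

theorem exists_finite_reps {L : Type*} [Semifield L] (hidem : ∀ x : L, x + x = x)
    (c : ℤ → L) (c0 : c 0 = 1) (cadd : ∀ i j, c (i + j) = c i * c j)
    (cmin : ∀ i j, i ≤ j → c j + c i = c i)
    (S : Finset L) (k : ℤ) (hk : 0 ≤ k)
    (hS1 : ∀ s ∈ S, s ≠ 0 → s + c (-k) = c (-k))
    (hS2 : ∀ s ∈ S, s ≠ 0 → c k + s = s) :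
    ∃ F : Set L, F.Finite ∧ ∀ x ∈ AddSubmonoid.closure
      {y : L | y = 0 ∨ ∃ a : ℤ, ∃ s ∈ S, y = c a * s}, x = 0 ∨ ∃ N : ℤ, ∃ y ∈ F, x = c N * y := by
  classical
  let P : Finset L := (Finset.Icc 0 (2 * k) ×ˢ (S.filter (· ≠ 0))).image (fun p => c p.1 * p.2)
  have hP : ∀ x, x ∈ P ↔ ∃ e s, 0 ≤ e ∧ e ≤ 2 * k ∧ s ∈ S ∧ s ≠ 0 ∧ x = c e * s := by
    intro x
    simp only [P, Finset.mem_image, Finset.mem_product, Finset.mem_Icc, Finset.mem_filter,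
      Prod.exists]
    constructor
    · rintro ⟨e, s, ⟨⟨h1, h2⟩, h3, h4⟩, h5⟩
      exact ⟨e, s, h1, h2, h3, h4, h5.symm⟩
    · rintro ⟨e, s, h1, h2, h3, h4, h5⟩
      exact ⟨e, s, ⟨⟨h1, h2⟩, h3, h4⟩, h5.symm⟩
  let F := AddSubmonoid.closure (P : Set L)
  have key : ∀ d : ℤ, 0 ≤ d → ∀ y' ∈ F, ∀ y ∈ F, c k + y = y → y + c d * y' ∈ F := by
    intro d hd y' hy'
    induction hy' using AddSubmonoid.closure_induction with
    | mem p hp =>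
      intro y hy hky
      obtain ⟨e, s, h1, h2, h3, h4, rfl⟩ := (hP _).1 hp
      by_cases h : d + e ≤ 2 * k
      · refine add_mem hy (AddSubmonoid.subset_closure ((hP _).2 ⟨d + e, s, ?_, h, h3, h4, ?_⟩))
        · omega
        · rw [cadd, mul_assoc]
      · have e1 : c d * (c e * s) + c (d + e - k) = c (d + e - k) := by
          rw [sub_eq_add_neg, cadd, cadd d e, ← mul_assoc, ← mul_add, hS1 s h3 h4]
        have e2 := cmin k (d + e - k) (by omega)
        have e3 : y + c d * (c e * s) = y := by
          rw [← hky, ← e2, ← e1]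
          generalize c d * (c e * s) = A
          generalize c (d + e - k) = B
          rw [show A + B + c k + y + A = (A + A) + B + c k + y by
            simp only [add_assoc, add_comm, add_left_comm], hidem]
        rw [e3]; exact hy
    | zero => intro y hy _; simpa using hy
    | add a b _ _ ha hb =>
      intro y hy hky
      rw [mul_add, ← add_assoc]
      exact hb _ (ha y hy hky) (by rw [← add_assoc, hky])
  refine ⟨F, idem_closure_finite hidem P, ?_⟩
  have main : ∀ x ∈ AddSubmonoid.closure
      {y : L | y = 0 ∨ ∃ a : ℤ, ∃ s ∈ S, y = c a * s},
      x = 0 ∨ ∃ N : ℤ, ∃ y ∈ F, x = c N * y ∧ c k + y = y := by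
    intro x hx
    induction hx using AddSubmonoid.closure_induction with
    | mem x hx =>
      rcases hx with rfl | ⟨a, s, hs, rfl⟩
      · exact Or.inl rfl
      by_cases h : s = 0
      · left; rw [h, mul_zero]
      · right
        refine ⟨a, s, AddSubmonoid.subset_closure ((hP _).2
          ⟨0, s, le_rfl, by omega, hs, h, by rw [c0, one_mul]⟩), rfl, hS2 s hs h⟩
    | zero => exact Or.inl rfl
    | add x x' _ _ hx hx' =>
      rcases hx with rfl | ⟨N, y, hy, rfl, hky⟩
      · simpa using hx'
      rcases hx' with rfl | ⟨M, y', hy', rfl, hky'⟩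
      · right; exact ⟨N, y, hy, by simp, hky⟩
      right
      rcases le_total N M with h | h
      · refine ⟨N, y + c (M - N) * y', key _ (by omega) _ hy' _ hy hky, ?_, ?_⟩
        · rw [mul_add, ← mul_assoc, ← cadd]; congr 3; omega
        · rw [← add_assoc, hky]
      · refine ⟨M, y' + c (N - M) * y, key _ (by omega) _ hy _ hy' hky', ?_, ?_⟩
        · rw [mul_add, ← mul_assoc, ← cadd, add_comm]; congr 3; omega
        · rw [← add_assoc, hky']
  intro x hx
  rcases main x hx with h | ⟨N, y, hy, h, _⟩
  · exact Or.inl h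
  · exact Or.inr ⟨N, y, hy, h⟩

/-- Let `L` be an idempotent semifield and `f : ℤ_max →+* L` an injective semiring
homomorphism which is archimedean and finite.  Then the subgroup `Z(f)` has finite index in
`Lˣ`. -/
theorem archimedean_finite_extension_finite_unit_index {L : Type*} [Semifield L]
    (hidem : ∀ x : L, x + x = x)
    (f : Tropical (WithTop ℤ) →+* L) (hf : Function.Injective f)
    (harch : ∀ x : L, ∃ y : Tropical (WithTop ℤ), x + f y = f y)
    (hfin : ∃ S : Finset L, ∀ x : L,
      x ∈ AddSubmonoid.closure {y : L | ∃ a : Tropical (WithTop ℤ), ∃ s ∈ S, y = f a * s}) :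
    (tropUnitSubgroup f).FiniteIndex := by
  classical
  obtain ⟨S, hS⟩ := hfin
  let c : ℤ → L := fun a => f (trop (a : WithTop ℤ))
  have c0 : c 0 = 1 := by simp [c]
  have cadd : ∀ i j, c (i + j) = c i * c j := by
    intro i j
    simp only [c]
    rw [← map_mul, ← Tropical.trop_add, ← WithTop.coe_add]
  have cmin : ∀ i j, i ≤ j → c j + c i = c i := by
    intro i j h
    simp only [c]
    rw [← map_add, Tropical.add_eq_right]
    exact Tropical.trop_monotone (WithTop.coe_le_coe.2 h)
  have cne : ∀ i, c i ≠ 0 := by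
    intro i h
    have := cadd i (-i)
    rw [h, zero_mul, add_neg_cancel, c0] at this
    exact one_ne_zero this
  have htop : ∀ a : Tropical (WithTop ℤ), f a = 0 ∨ ∃ i : ℤ, f a = c i := by
    intro a
    induction a using Tropical.tropRec with
    | h a =>
      induction a using WithTop.recTopCoe with
      | top => left; exact map_zero f
      | coe a => right; exact ⟨a, rfl⟩
  have hb : ∀ x : L, ∃ k : ℕ, x + c (-k) = c (-k) := by
    intro x
    obtain ⟨y, hy⟩ := harch x
    rcases htop y with h | ⟨i, h⟩
    · rw [h, add_zero] at hy
      exact ⟨0, by simp [hy]⟩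
    · rw [h] at hy
      refine ⟨i.natAbs, ?_⟩
      have := cmin (-(i.natAbs : ℤ)) i (by omega)
      rw [← this, ← add_assoc, hy]
  choose κ hκ using hb
  have hmono : ∀ (x : L) (k : ℕ), κ x ≤ k → x + c (-k) = c (-k) := by
    intro x k h
    have := cmin (-(k : ℤ)) (-(κ x : ℤ)) (by omega)
    rw [← this, ← add_assoc, hκ]
  let k : ℕ := S.sup (fun s => κ s ⊔ κ s⁻¹)
  have hk : ∀ s ∈ S, κ s ⊔ κ s⁻¹ ≤ k := fun s hs =>
    Finset.le_sup (f := fun s => κ s ⊔ κ s⁻¹) hs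
  obtain ⟨F, hF, hrep⟩ := exists_finite_reps hidem c c0 cadd cmin S k (by positivity)
    (fun s hs _ => hmono s k (le_sup_left.trans (hk s hs)))
    (fun s hs h0 => by
      have h1 := hmono s⁻¹ k (le_sup_right.trans (hk s hs))
      have h2 := congrArg (fun z => s * c k * z) h1
      have h3 : c k * c (-k) = 1 := by rw [← cadd, add_neg_cancel, c0]
      simp only [mul_add] at h2
      rw [mul_assoc s, mul_assoc s, h3, mul_one, mul_comm (c k), ← mul_assoc,
        mul_inv_cancel₀ h0, one_mul] at h2
      exact h2)
  have hrep' : ∀ w : Lˣ, ∃ N : ℤ, ∃ y ∈ F, (w : L) = c N * y := by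
    intro w
    have hmem := AddSubmonoid.closure_mono (t := {y : L | y = 0 ∨ ∃ a : ℤ, ∃ s ∈ S, y = c a * s})
      (by
        rintro y ⟨a, s, hs, rfl⟩
        rcases htop a with h | ⟨i, h⟩
        · left; rw [h, zero_mul]
        · right; exact ⟨i, s, hs, by rw [h]⟩) (hS (w : L))
    exact (hrep _ hmem).resolve_left w.ne_zero
  have hG : ((fun w : Lˣ => (w : L)) ⁻¹' F).Finite :=
    hF.preimage (Units.val_injective.injOn)
  have := hG.to_subtype
  have hq : Finite (Lˣ ⧸ tropUnitSubgroup f) := by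
    refine Finite.of_surjective
      (fun w : ((fun w : Lˣ => (w : L)) ⁻¹' F) =>
        (QuotientGroup.mk w.1 : Lˣ ⧸ tropUnitSubgroup f)) ?_
    intro q
    induction q using QuotientGroup.induction_on with
    | H w =>
      obtain ⟨N, y, hy, h⟩ := hrep' w
      have hy0 : y ≠ 0 := by
        rintro rfl
        exact w.ne_zero (by rw [h, mul_zero])
      refine ⟨⟨Units.mk0 y hy0, hy⟩, ?_⟩
      refine QuotientGroup.eq.2 ⟨N, ?_⟩
      rw [Units.val_mul, h, Units.val_inv_eq_inv_val, Units.val_mk0]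
      change y⁻¹ * (c N * y) = c N
      rw [mul_comm, mul_assoc, mul_inv_cancel₀ hy0, mul_one]
  exact Subgroup.finiteIndex_of_finite_quotient
end

section
/- Let L be an idempotent semifield and K ⊆ L a convex subsemifield (a subsemiring closed under inverses of its nonzero elements such that whenever x ∈ L and y, z ∈ K satisfy x + y = y and x + z = x, then x ∈ K). Then addition on L descends to the quotient of L by the action of Kˣ: for all x, y ∈ L and every nonzero u ∈ K, there exists a nonzero w ∈ K such that x + u * y = w * (x + y). -/
/-- Let `L` be an idempotent semifield and `K ⊆ L` a convex subsemifield.  Then addition on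
`L` descends to the quotient of `L` by the action of `Kˣ`: for all `x, y ∈ L` and every
nonzero `u ∈ K` there is a nonzero `w ∈ K` with `x + u * y = w * (x + y)`. -/
theorem convex_quotient_add_well_defined {L : Type*} [Semifield L]
    (hL : ∀ x : L, x + x = x)
    (K : Subsemiring L)
    (hinv : ∀ x ∈ K, x ≠ 0 → x⁻¹ ∈ K)
    (hconv : ∀ x : L, ∀ y ∈ K, ∀ z ∈ K, x + y = y → x + z = x → x ∈ K) :
    ∀ x y : L, ∀ u ∈ K, u ≠ 0 → ∃ w ∈ K, w ≠ 0 ∧ x + u * y = w * (x + y) := by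
  intro x y u hu hu0
  have zsf : ∀ a b : L, a + b = 0 → a = 0 := by
    intro a b h
    calc a = a + (a + b) := by rw [h, add_zero]
      _ = (a + a) + b := by ring
      _ = 0 := by rw [hL, h]
  by_cases hs : x + y = 0
  · have hx := zsf _ _ hs
    have hy := zsf y x (by rw [add_comm]; exact hs)
    exact ⟨1, K.one_mem, one_ne_zero, by simp [hx, hy]⟩
  have hv0 : 1 + u⁻¹ ≠ 0 := fun h => one_ne_zero (zsf _ _ h)
  have ht0 : x + u * y ≠ 0 := by
    intro h
    have hx := zsf _ _ h
    have hy := zsf (u * y) x (by rw [add_comm]; exact h)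
    have hy' : y = 0 := (mul_eq_zero.mp hy).resolve_left hu0
    exact hs (by simp [hx, hy'])
  refine ⟨(x + u * y) * (x + y)⁻¹, ?_, mul_ne_zero ht0 (inv_ne_zero hs), ?_⟩
  · refine hconv _ (1 + u) (K.add_mem K.one_mem hu) (1 + u⁻¹)⁻¹
      (hinv _ (K.add_mem K.one_mem (hinv u hu hu0)) hv0) ?_ ?_
    · apply mul_right_cancel₀ hs
      calc ((x + u * y) * (x + y)⁻¹ + (1 + u)) * (x + y)
          = (x + u * y) * ((x + y)⁻¹ * (x + y)) + (1 + u) * (x + y) := by ring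
        _ = (x + x) + (u * y + u * y) + y + u * x := by rw [inv_mul_cancel₀ hs]; ring
        _ = (1 + u) * (x + y) := by rw [hL, hL]; ring
    · apply mul_right_cancel₀ hs
      apply mul_right_cancel₀ hv0
      have e : (x + u * y) * (1 + u⁻¹) = x + u * y + u⁻¹ * x + y := by
        calc (x + u * y) * (1 + u⁻¹) = x + u * y + u⁻¹ * x + (u * u⁻¹) * y := by ring
          _ = _ := by rw [mul_inv_cancel₀ hu0, one_mul]
      have e2 : (x + u * y) * (x + y)⁻¹ * (x + y) = x + u * y := by
        rw [mul_assoc, inv_mul_cancel₀ hs, mul_one]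
      rw [add_mul, e2, add_mul, e, mul_right_comm, inv_mul_cancel₀ hv0, one_mul]
      calc x + u * y + u⁻¹ * x + y + (x + y)
          = (x + x) + u * y + u⁻¹ * x + (y + y) := by
            simp only [add_assoc, add_comm, add_left_comm]
        _ = _ := by rw [hL, hL]
  · rw [mul_assoc, inv_mul_cancel₀ hs, mul_one]
end

section
/- Let K and L be idempotent semifields and f : K →+* L an injective semiring homomorphism such that L is a finite extension of K (there is a finite subset S ⊆ L such that every element of L is a finite sum of elements of the form f(a) * s with a ∈ K, s ∈ S). Then the extension is archimedean: for every x ∈ L there exists y ∈ K with x + f y = f y. -/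
/-- Let `K` and `L` be idempotent semifields and `f : K →+* L` an injective semiring
homomorphism making `L` a finite extension of `K` (there is a finite subset `S ⊆ L` such that
every element of `L` is a finite sum of elements of the form `f a * s` with `a ∈ K`, `s ∈ S`).
Then the extension is archimedean: for every `x ∈ L` there is `y ∈ K` with `x + f y = f y`. -/
theorem finite_extension_archimedean {K L : Type*} [Semifield K] [Semifield L]
    (hK : ∀ x : K, x + x = x) (hL : ∀ x : L, x + x = x)
    (f : K →+* L) (hf : Function.Injective f)
    (hfin : ∃ S : Finset L, ∀ x : L,
      x ∈ AddSubmonoid.closure {y : L | ∃ a : K, ∃ s ∈ S, y = f a * s}) :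
    ∀ x : L, ∃ y : K, x + f y = f y := by
  classical
  obtain ⟨S, hS⟩ := hfin
  obtain ⟨u, hu⟩ : ∃ u : L, ∀ s ∈ S, s + u = u := by
    refine ⟨∑ t ∈ S, t, fun s hs => ?_⟩
    rw [← Finset.add_sum_erase S (fun t => t) hs, ← add_assoc, hL]
  have key : ∀ x : L, ∃ a : K, x + f a * u = f a * u := by
    intro x
    induction hS x using AddSubmonoid.closure_induction with
    | mem x hx =>
      obtain ⟨a, s, hs, rfl⟩ := hx
      exact ⟨a, by rw [← mul_add, hu s hs]⟩
    | zero => exact ⟨0, by simp⟩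
    | add x y _ _ hx hy =>
      obtain ⟨a, ha⟩ := hx
      obtain ⟨b, hb⟩ := hy
      refine ⟨a + b, ?_⟩
      rw [map_add, add_mul, add_add_add_comm, ha, hb]
  intro x
  obtain ⟨a, ha⟩ := key x
  by_cases h0 : u = 0
  · exact ⟨0, by simpa [h0] using ha⟩
  obtain ⟨b, hb⟩ := key (u * u)
  have hub : u + f b = f b := by
    apply mul_right_cancel₀ h0
    rw [add_mul, hb]
  refine ⟨a * b, ?_⟩
  have h1 : f a * u + f (a * b) = f (a * b) := by
    rw [map_mul, ← mul_add, hub]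
  calc x + f (a * b) = (x + f a * u) + f (a * b) := by rw [add_assoc, h1]
    _ = f (a * b) := by rw [ha, h1]
end

section
/- Let L be an idempotent semifield and f : ℤ_max →+* L an injective semiring homomorphism such that L is a finite extension of ℤ_max (there is a finite subset S ⊆ L such that every element of L is a finite sum of elements of the form f(a) * s with a ∈ ℤ_max, s ∈ S). Then the subgroup Z(f) := {w ∈ Lˣ : ∃ a : ℤ, (w : L) = f (trop a)} has finite index in Lˣ, i.e., every finite extension of ℤ_max has finite unit index. -/
open Tropical

/-- The natural order of an idempotent semiring, as a plain relation. -/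
def NLe {L : Type*} [Semifield L] (x y : L) : Prop := x + y = y

theorem NLe.trans {L : Type*} [Semifield L] {x y z : L} (h : NLe x y) (k : NLe y z) :
    NLe x z := by
  unfold NLe at *
  rw [← k, ← add_assoc, h]

theorem NLe.antisymm {L : Type*} [Semifield L] {x y : L} (h : NLe x y) (k : NLe y x) :
    x = y := by
  unfold NLe at *
  rw [← k, add_comm, h]

theorem NLe.mul {L : Type*} [Semifield L] {x y : L} (h : NLe x y) (z : L) :
    NLe (z * x) (z * y) := by
  unfold NLe at *
  rw [← mul_add, h]

theorem NLe.zero {L : Type*} [Semifield L] (y : L) : NLe 0 y := zero_add y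

theorem NLe.add_le {L : Type*} [Semifield L] {x y z : L} (h : NLe x z) (k : NLe y z) :
    NLe (x + y) z := by
  unfold NLe at *
  rw [add_assoc, k, h]

theorem NLe.left {L : Type*} [Semifield L] (hidem : ∀ x : L, x + x = x) (x y : L) :
    NLe x (x + y) := by
  unfold NLe
  rw [← add_assoc, hidem]

theorem NLe.right {L : Type*} [Semifield L] (hidem : ∀ x : L, x + x = x) (x y : L) :
    NLe y (x + y) := by
  rw [add_comm]
  exact NLe.left hidem y x

theorem NLe.inv {L : Type*} [Semifield L] {x y : L} (hx : x ≠ 0) (hy : y ≠ 0)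
    (h : NLe x y) : NLe y⁻¹ x⁻¹ := by
  have := h.mul (x⁻¹ * y⁻¹)
  have e1 : x⁻¹ * y⁻¹ * x = y⁻¹ := by field_simp
  have e2 : x⁻¹ * y⁻¹ * y = x⁻¹ := by field_simp
  rwa [e1, e2] at this

theorem NLe.sum_le {L ι : Type*} [Semifield L] (S : Finset ι) (h : ι → L) (z : L)
    (H : ∀ s ∈ S, NLe (h s) z) : NLe (∑ s ∈ S, h s) z :=
  Finset.sum_induction h (fun x => NLe x z) (fun _ _ => NLe.add_le) (NLe.zero z) H

theorem NLe.le_sum {L ι : Type*} [Semifield L] (hidem : ∀ x : L, x + x = x)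
    (S : Finset ι) (h : ι → L) (s : ι) (hs : s ∈ S) : NLe (h s) (∑ s ∈ S, h s) := by
  classical
  rw [← Finset.add_sum_erase S h hs]
  exact NLe.left hidem _ _

/-- The image of the integer `a`, oriented so that it is monotone in `a`. -/
def gZ {L : Type*} [Semifield L] (f : Tropical (WithTop ℤ) →+* L) (a : ℤ) : L :=
  f (trop ((-a : ℤ) : WithTop ℤ))

theorem gZ_add {L : Type*} [Semifield L] (f : Tropical (WithTop ℤ) →+* L) (a b : ℤ) :
    gZ f (a + b) = gZ f a * gZ f b := by
  unfold gZ
  rw [← map_mul, ← Tropical.trop_add, ← WithTop.coe_add, neg_add]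

theorem gZ_zero {L : Type*} [Semifield L] (f : Tropical (WithTop ℤ) →+* L) :
    gZ f 0 = 1 := by
  simp [gZ]

theorem gZ_neg {L : Type*} [Semifield L] (f : Tropical (WithTop ℤ) →+* L) (a : ℤ) :
    gZ f (-a) = (gZ f a)⁻¹ := by
  refine eq_inv_of_mul_eq_one_left ?_
  rw [← gZ_add, neg_add_cancel, gZ_zero]

theorem gZ_ne {L : Type*} [Semifield L] (f : Tropical (WithTop ℤ) →+* L) (a : ℤ) :
    gZ f a ≠ 0 := by
  intro h
  have := gZ_add f a (-a)
  rw [h, zero_mul, add_neg_cancel, gZ_zero] at this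
  exact one_ne_zero this

theorem gZ_mono {L : Type*} [Semifield L] (f : Tropical (WithTop ℤ) →+* L) {a b : ℤ}
    (h : a ≤ b) : NLe (gZ f a) (gZ f b) := by
  unfold gZ NLe
  rw [← map_add, Tropical.add_eq_right]
  rw [← Tropical.untrop_le_iff, Tropical.untrop_trop, Tropical.untrop_trop, WithTop.coe_le_coe]
  omega

theorem gZ_le {L : Type*} [Semifield L] (f : Tropical (WithTop ℤ) →+* L)
    (hf : Function.Injective f) {a b : ℤ} (h : NLe (gZ f a) (gZ f b)) : a ≤ b := by
  by_contra hlt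
  have e := h.antisymm (gZ_mono f (by omega))
  have := hf e
  have := Tropical.trop_injective this
  have := WithTop.coe_injective this
  omega

theorem f_cases {L : Type*} [Semifield L] (f : Tropical (WithTop ℤ) →+* L)
    (b : Tropical (WithTop ℤ)) : f b = 0 ∨ ∃ a, f b = gZ f a := by
  induction b using Tropical.tropRec with
  | h x =>
    induction x using WithTop.recTopCoe with
    | top => left; simp
    | coe n => right; exact ⟨-n, by simp [gZ]⟩

/-- Every finite extension of `ℤ_max` has finite unit index: if `L` is an idempotent
semifield and `f : ℤ_max →+* L` is an injective semiring homomorphism making `L` a finitely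
generated semimodule over `ℤ_max`, then `Z(f)` has finite index in `Lˣ`. -/
theorem finite_extension_finite_unit_index {L : Type*} [Semifield L]
    (hidem : ∀ x : L, x + x = x)
    (f : Tropical (WithTop ℤ) →+* L) (hf : Function.Injective f)
    (hfin : ∃ S : Finset L, ∀ x : L,
      x ∈ AddSubmonoid.closure {y : L | ∃ a : Tropical (WithTop ℤ), ∃ s ∈ S, y = f a * s}) :
    (tropUnitSubgroup f).FiniteIndex := by
  classical
  obtain ⟨S, hS⟩ := hfin
  -- a common bound for the generators and their inverses
  set T : L := 1 + ∑ s ∈ S, (s + s⁻¹) with hT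
  have hT0 : T ≠ 0 := by
    intro h
    have h1 : NLe 1 T := NLe.left hidem _ _
    rw [h] at h1
    exact one_ne_zero ((add_zero (1 : L)).symm.trans h1)
  have hsT : ∀ s ∈ S, NLe s T := fun s hs =>
    ((NLe.left hidem s s⁻¹).trans (NLe.le_sum hidem S (fun s => s + s⁻¹) s hs)).trans
      (NLe.right hidem _ _)
  have hsT' : ∀ s ∈ S, NLe s⁻¹ T := fun s hs =>
    ((NLe.right hidem s s⁻¹).trans (NLe.le_sum hidem S (fun s => s + s⁻¹) s hs)).trans
      (NLe.right hidem _ _)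
  have hmulr : ∀ {x y : L} (z : L), NLe x y → NLe (x * z) (y * z) := by
    intro x y z h
    rw [mul_comm x, mul_comm y]
    exact h.mul z
  have hbd : ∀ x : L, ∃ a : ℤ, NLe x (gZ f a * T) := by
    intro x
    induction hS x using AddSubmonoid.closure_induction with
    | mem x hx =>
      obtain ⟨b, s, hs, rfl⟩ := hx
      rcases f_cases f b with h | ⟨a, h⟩
      · exact ⟨0, by rw [h, zero_mul]; exact NLe.zero _⟩
      · exact ⟨a, by rw [h]; exact (hsT s hs).mul _⟩
    | zero => exact ⟨0, NLe.zero _⟩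
    | add x y _ _ hx hy =>
      obtain ⟨a, ha⟩ := hx
      obtain ⟨b, hb⟩ := hy
      exact ⟨max a b, (ha.trans (hmulr T (gZ_mono f (le_max_left a b)))).add_le
        (hb.trans (hmulr T (gZ_mono f (le_max_right a b))))⟩
  obtain ⟨d, hd⟩ : ∃ d : ℤ, NLe T (gZ f d) := by
    obtain ⟨a, ha⟩ := hbd (T * T)
    refine ⟨a, ?_⟩
    have := hmulr T⁻¹ ha
    rwa [mul_inv_cancel_right₀ hT0, mul_inv_cancel_right₀ hT0] at this
  have hup : ∀ s ∈ S, NLe s (gZ f d) := fun s hs => (hsT s hs).trans hd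
  have hlo : ∀ s ∈ S, s ≠ 0 → NLe (gZ f (-d)) s := by
    intro s hs h0
    have := ((hsT' s hs).trans hd).inv (inv_ne_zero h0) (gZ_ne f d)
    rwa [inv_inv, ← gZ_neg] at this
  -- every nonzero element is at bounded distance from the image of `f`
  have hnear : ∀ x : L, x = 0 ∨ ∃ A : ℤ, NLe (gZ f (A - d)) x ∧ NLe x (gZ f (A + d)) := by
    intro x
    induction hS x using AddSubmonoid.closure_induction with
    | mem x hx =>
      obtain ⟨b, s, hs, rfl⟩ := hx
      by_cases h0 : s = 0
      · left; rw [h0, mul_zero]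
      rcases f_cases f b with h | ⟨a, h⟩
      · left; rw [h, zero_mul]
      · right
        refine ⟨a, ?_, ?_⟩
        · rw [h, sub_eq_add_neg, gZ_add]; exact (hlo s hs h0).mul _
        · rw [h, gZ_add]; exact (hup s hs).mul _
    | zero => left; rfl
    | add x y _ _ hx hy =>
      rcases hx with rfl | ⟨a, ha, ha'⟩
      · rw [zero_add]; exact hy
      rcases hy with rfl | ⟨b, hb, hb'⟩
      · rw [add_zero]; exact Or.inr ⟨a, ha, ha'⟩
      right
      refine ⟨max a b, ?_, ?_⟩
      · rcases max_choice a b with h | h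
        · rw [h]; exact ha.trans (NLe.left hidem _ _)
        · rw [h]; exact hb.trans (NLe.right hidem _ _)
      · exact (ha'.trans (gZ_mono f (by have := le_max_left a b; omega))).add_le
          (hb'.trans (gZ_mono f (by have := le_max_right a b; omega)))
  set S' := S.filter (· ≠ 0) with hS'
  have hrep : ∀ x : L, ∃ b : L → Tropical (WithTop ℤ), x = ∑ s ∈ S', f (b s) * s := by
    intro x
    induction hS x using AddSubmonoid.closure_induction with
    | mem x hx =>
      obtain ⟨b, s, hs, rfl⟩ := hx
      by_cases h0 : s = 0
      · exact ⟨fun _ => 0, by simp [h0]⟩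
      refine ⟨fun t => if t = s then b else 0, ?_⟩
      rw [Finset.sum_eq_single s]
      · simp
      · intro t _ hts; simp [hts]
      · intro h; exact absurd (Finset.mem_filter.2 ⟨hs, h0⟩) h
    | zero => exact ⟨fun _ => 0, by simp⟩
    | add x y _ _ hx hy =>
      obtain ⟨a, ha⟩ := hx
      obtain ⟨b, hb⟩ := hy
      refine ⟨fun s => a s + b s, ?_⟩
      simp only [map_add, add_mul, Finset.sum_add_distrib]
      rw [← ha, ← hb]
  -- the interval is finite
  set F : Set L := Set.range
    (fun φ : S' → Set.Icc (-2 * d) (2 * d) => ∑ s : S', gZ f (φ s) * (s : L)) with hF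
  have hFfin : F.Finite := Set.finite_range _
  have hinterval : ∀ y : L, NLe (gZ f (-d)) y → NLe y (gZ f d) → y ∈ F := by
    intro y hy1 hy2
    obtain ⟨b, hb⟩ := hrep y
    have hy : y = ∑ s ∈ S', (f (b s) + gZ f (-2 * d)) * s := by
      simp only [add_mul, Finset.sum_add_distrib]
      rw [← hb, add_comm]
      refine (NLe.sum_le S' _ y ?_).symm
      intro s hs
      have h1 := (hup s (Finset.mem_filter.1 hs).1).mul (gZ f (-2 * d))
      rw [← gZ_add, show -2 * d + d = -d by ring] at h1
      exact h1.trans hy1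
    have hc : ∀ s : S', ∃ e : Set.Icc (-2 * d) (2 * d),
        f (b s) + gZ f (-2 * d) = gZ f e := by
      rintro ⟨s, hs⟩
      have hsS := Finset.mem_filter.1 hs
      obtain ⟨e, he⟩ : ∃ e : ℤ, f (b s) + gZ f (-2 * d) = gZ f e := by
        rcases f_cases f (b s) with h | ⟨a, h⟩
        · exact ⟨-2 * d, by rw [h, zero_add]⟩
        · rcases le_total a (-2 * d) with h' | h'
          · exact ⟨-2 * d, by rw [h]; exact gZ_mono f h'⟩
          · exact ⟨a, by rw [h, add_comm]; exact gZ_mono f h'⟩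
      refine ⟨⟨e, ?_, ?_⟩, he⟩
      · apply gZ_le f hf
        rw [← he]
        exact NLe.right hidem _ _
      · have h1 : NLe (gZ f e * s) y := by
          rw [hy, ← he]
          exact NLe.le_sum hidem S' (fun s => (f (b s) + gZ f (-2 * d)) * s) s hs
        have h2 := (hlo s hsS.1 hsS.2).mul (gZ f e)
        rw [← gZ_add] at h2
        have := gZ_le f hf ((h2.trans h1).trans hy2)
        omega
    choose φ hφ using hc
    refine ⟨φ, ?_⟩
    rw [hy, ← Finset.sum_coe_sort S']
    exact Finset.sum_congr rfl fun s _ => by rw [hφ s]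
  have hUfin : Finite {w : Lˣ | (w : L) ∈ F} :=
    (hFfin.preimage (Units.val_injective.injOn)).to_subtype
  have hsurj : Function.Surjective
      (fun w : {w : Lˣ | (w : L) ∈ F} => (QuotientGroup.mk w.1 : Lˣ ⧸ tropUnitSubgroup f)) := by
    intro q
    obtain ⟨w, rfl⟩ := QuotientGroup.mk_surjective q
    rcases hnear w with h | ⟨A, h1, h2⟩
    · exact absurd h w.ne_zero
    let z : Lˣ := Units.mk0 (gZ f (-A)) (gZ_ne f _)
    have hz : z ∈ tropUnitSubgroup f := ⟨- -A, rfl⟩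
    refine ⟨⟨w * z, ?_⟩, ?_⟩
    · have k1 := hmulr (gZ f (-A)) h1
      have k2 := hmulr (gZ f (-A)) h2
      rw [← gZ_add] at k1 k2
      rw [show A - d + -A = -d by ring] at k1
      rw [show A + d + -A = d by ring] at k2
      exact hinterval _ k1 k2
    · exact QuotientGroup.mk_mul_of_mem w hz
  have : Finite (Lˣ ⧸ tropUnitSubgroup f) := Finite.of_surjective _ hsurj
  exact Subgroup.finiteIndex_of_finite_quotient
end

section
/- Let L be an idempotent semifield and f : ℤ_max →+* L an injective semiring homomorphism such that the subgroup Z(f) := {w ∈ Lˣ : ∃ a : ℤ, (w : L) = f (trop a)} has finite index in Lˣ. Then there exist a positive integer n and a semiring isomorphism φ : L ≃+* ℤ_max such that φ (f (trop a)) = trop (n * a) for all a : ℤ; that is, L is isomorphic as an extension of ℤ_max to the relative Frobenius extension F^(n). -/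
open Tropical

theorem cfui_ne_zero {L : Type*} [Semifield L] (hidem : ∀ x : L, x + x = x) (y : L) :
    1 + y ≠ 0 := by
  intro h
  have h1 : (1 : L) = 0 := by
    calc (1 : L) = 1 + (1 + y) := by rw [h, add_zero]
      _ = 1 + y := by rw [← add_assoc, hidem]
      _ = 0 := h
  exact one_ne_zero h1

/-- If `1 ≤ u ^ n` then `1 ≤ u` in an idempotent semifield. -/
theorem cfui_one_le {L : Type*} [Semifield L] (hidem : ∀ x : L, x + x = x) (u : L) (m : ℕ)
    (h : u ^ (m + 1) + 1 = u ^ (m + 1)) : u + 1 = u := by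
  set s : L := ∑ i ∈ Finset.range (m + 1), u ^ i with hs
  have hs0 : s ≠ 0 := by
    rw [hs, Finset.sum_range_succ', pow_zero, add_comm]
    exact cfui_ne_zero hidem _
  have h1 : u * s + 1 = s + u ^ (m + 1) := by
    rw [hs, ← Finset.sum_range_succ, Finset.mul_sum, Finset.sum_range_succ' _ (m + 1), pow_zero]
    simp only [pow_succ']
  have h2 : u * s = u * s + u ^ (m + 1) := by
    rw [hs, Finset.sum_range_succ, mul_add, ← pow_succ', add_assoc, hidem]
  have h3 : u * s + 1 = u * s := by
    rw [h2, add_assoc, h]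
  have h4 : (u + 1) * s = u * s := by
    calc (u + 1) * s = u * s + s := by ring
      _ = u * s + u ^ (m + 1) + s := by rw [← h2]
      _ = u * s + (s + u ^ (m + 1)) := by ring
      _ = (u * s + u * s) + 1 := by rw [← h1]; ring
      _ = u * s := by rw [hidem, h3]
  exact mul_right_cancel₀ hs0 h4

theorem cfui_le {L : Type*} [Semifield L] (hidem : ∀ x : L, x + x = x) (x y : L) (N : ℕ)
    (hN : 0 < N) (h : x ^ N + y ^ N = x ^ N) : x + y = x := by
  obtain ⟨m, rfl⟩ : ∃ m, N = m + 1 := ⟨N - 1, by omega⟩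
  by_cases hy : y = 0
  · rw [hy, add_zero]
  have h1 : (x / y) + 1 = x / y := by
    apply cfui_one_le hidem _ m
    have := congrArg (fun z => z / y ^ (m + 1)) h
    simp only [add_div] at this
    rwa [div_self (pow_ne_zero _ hy), ← div_pow] at this
  have h2 := congrArg (fun z => z * y) h1
  simp only [add_mul, one_mul] at h2
  rwa [div_mul_cancel₀ _ hy] at h2

theorem cfui_inj {L : Type*} [Semifield L] (hidem : ∀ x : L, x + x = x) (x y : L) (N : ℕ)
    (hN : 0 < N) (h : x ^ N = y ^ N) : x = y := by
  have h1 := cfui_le hidem x y N hN (by rw [h, hidem])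
  have h2 := cfui_le hidem y x N hN (by rw [h, hidem])
  rw [← h1, add_comm, h2]

theorem cfui_trop_pow (a : ℤ) (d : ℕ) :
    trop (a : WithTop ℤ) ^ d = trop (((d : ℤ) * a : ℤ) : WithTop ℤ) := by
  induction d with
  | zero => simp
  | succ k ih =>
    rw [pow_succ, ih, ← Tropical.trop_add, ← WithTop.coe_add]
    congr 2
    push_cast
    ring

theorem cfui_cases (t : Tropical (WithTop ℤ)) : t = 0 ∨ ∃ a : ℤ, t = trop (a : WithTop ℤ) := by
  induction t using Tropical.tropRec with
  | h X =>
    cases X with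
    | top => left; rfl
    | coe a => right; exact ⟨a, rfl⟩

theorem cfui_trop_pow_inj (d : ℕ) (hd : 0 < d) (s t : Tropical (WithTop ℤ))
    (h : s ^ d = t ^ d) : s = t := by
  rcases cfui_cases s with rfl | ⟨a, rfl⟩
  · rw [zero_pow hd.ne'] at h
    exact (eq_zero_of_pow_eq_zero h.symm).symm
  rcases cfui_cases t with rfl | ⟨b, rfl⟩
  · rw [zero_pow hd.ne'] at h
    exact eq_zero_of_pow_eq_zero h
  rw [cfui_trop_pow, cfui_trop_pow] at h
  have h2 : (d : ℤ) * a = d * b := WithTop.coe_injective (Tropical.trop_injective h)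
  rw [mul_left_cancel₀ (by exact_mod_cast hd.ne') h2]

theorem classification_of_finite_unit_index {L : Type*} [Semifield L]
    (hidem : ∀ x : L, x + x = x)
    (f : Tropical (WithTop ℤ) →+* L) (hf : Function.Injective f)
    (hui : (tropUnitSubgroup f).FiniteIndex) :
    ∃ (n : ℕ) (φ : L ≃+* Tropical (WithTop ℤ)), 0 < n ∧
      ∀ a : ℤ, φ (f (trop (a : WithTop ℤ))) = trop (((n : ℤ) * a : ℤ) : WithTop ℤ) := by
  obtain ⟨N, hNdef⟩ : ∃ N, N = (tropUnitSubgroup f).index := ⟨_, rfl⟩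
  have hN : 0 < N := hNdef ▸ Nat.pos_of_ne_zero hui.index_ne_zero
  have hex : ∀ x : L, ∃ t, f t = x ^ N := by
    intro x
    by_cases hx : x = 0
    · exact ⟨0, by rw [hx, map_zero, zero_pow hN.ne']⟩
    · obtain ⟨a, ha⟩ : (Units.mk0 x hx) ^ N ∈ tropUnitSubgroup f :=
        hNdef ▸ Subgroup.pow_index_mem (tropUnitSubgroup f) (Units.mk0 x hx)
      exact ⟨_, by rw [← ha]; simp⟩
  choose g hg using hex
  have g_mul : ∀ x y, g (x * y) = g x * g y := fun x y => hf (by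
    rw [map_mul, hg, hg, hg, mul_pow])
  have g_add : ∀ x y, g (x + y) = g x + g y := by
    intro x y
    rcases le_total (g x) (g y) with h | h
    · have h1 : g x + g y = g x := Tropical.add_eq_left h
      have h2 : x + y = x := cfui_le hidem x y N hN (by rw [← hg, ← hg, ← map_add, h1])
      rw [h1, h2]
    · have h1 : g y + g x = g y := Tropical.add_eq_left h
      have h2 : y + x = y := cfui_le hidem y x N hN (by rw [← hg, ← hg, ← map_add, h1])
      rw [add_comm (g x), h1, add_comm x, h2]
  have g_inj : Function.Injective g := fun x y h =>
    cfui_inj hidem x y N hN (by rw [← hg, ← hg, h])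
  have g_f : ∀ t, g (f t) = t ^ N := fun t => hf (by rw [hg, map_pow])
  have g_zero : g 0 = 0 := hf (by rw [hg, map_zero, zero_pow hN.ne'])
  have g_one : g 1 = 1 := hf (by rw [hg, map_one, one_pow])
  let S : AddSubgroup ℤ :=
    { carrier := {a | ∃ x, g x = trop (a : WithTop ℤ)}
      zero_mem' := ⟨1, by rw [g_one]; simp⟩
      add_mem' := by
        rintro a b ⟨x, hx⟩ ⟨y, hy⟩
        exact ⟨x * y, by rw [g_mul, hx, hy, ← Tropical.trop_add, ← WithTop.coe_add]⟩
      neg_mem' := by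
        rintro a ⟨x, hx⟩
        have hx0 : x ≠ 0 := by
          rintro rfl
          rw [g_zero] at hx
          exact Tropical.zero_ne_trop_coe _ hx
        refine ⟨x⁻¹, ?_⟩
        have h1 : g x * g x⁻¹ = 1 := by rw [← g_mul, mul_inv_cancel₀ hx0, g_one]
        have h2 : trop (((-a : ℤ) : WithTop ℤ)) * trop ((a : WithTop ℤ)) = 1 := by
          rw [← Tropical.trop_add, ← WithTop.coe_add, neg_add_cancel, WithTop.coe_zero,
            Tropical.trop_zero]
        rw [hx] at h1
        calc g x⁻¹ = (trop (((-a : ℤ) : WithTop ℤ)) * trop ((a : WithTop ℤ))) * g x⁻¹ := by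
              rw [h2, one_mul]
          _ = _ := by rw [mul_assoc, h1, mul_one] }
  have hS : ∀ a : ℤ, a ∈ S ↔ ∃ x, g x = trop (a : WithTop ℤ) := fun a => Iff.rfl
  obtain ⟨d, hd⟩ : ∃ d : ℕ, ∀ a : ℤ, a ∈ S ↔ (d : ℤ) ∣ a := by
    obtain ⟨e, he⟩ := Int.subgroup_cyclic S
    refine ⟨e.natAbs, fun a => ?_⟩
    rw [he, ← AddSubgroup.zmultiples_eq_closure, Int.mem_zmultiples_iff, Int.natAbs_dvd]
  have hNS : (N : ℤ) ∈ S := (hS _).2 ⟨f (trop ((1 : ℤ) : WithTop ℤ)), by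
    rw [g_f, cfui_trop_pow, mul_one]⟩
  obtain ⟨n, hn⟩ : d ∣ N := by exact_mod_cast (hd _).1 hNS
  have hd0 : 0 < d := Nat.pos_of_ne_zero (by rintro rfl; simp at hn; omega)
  have hn0 : 0 < n := Nat.pos_of_ne_zero (by rintro rfl; simp at hn; omega)
  have hex2 : ∀ x, ∃ t, t ^ d = g x := by
    intro x
    rcases cfui_cases (g x) with h | ⟨a, h⟩
    · exact ⟨0, by rw [h, zero_pow hd0.ne']⟩
    · obtain ⟨b, rfl⟩ := (hd a).1 ((hS a).2 ⟨x, h⟩)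
      exact ⟨trop (b : WithTop ℤ), by rw [h, cfui_trop_pow]⟩
  choose p hp using hex2
  have hpinj := cfui_trop_pow_inj d hd0
  have p_bij : Function.Bijective p := by
    refine ⟨fun x y h => g_inj (by rw [← hp, ← hp, h]), fun t => ?_⟩
    rcases cfui_cases t with rfl | ⟨b, rfl⟩
    · exact ⟨0, hpinj _ _ (by rw [hp, g_zero, zero_pow hd0.ne'])⟩
    · obtain ⟨x, hx⟩ := (hS _).1 ((hd (d * b)).2 (dvd_mul_right _ _))
      exact ⟨x, hpinj _ _ (by rw [hp, hx, cfui_trop_pow])⟩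
  refine ⟨n, { Equiv.ofBijective p p_bij with
    map_mul' := fun x y => hpinj _ _ ?_
    map_add' := fun x y => hpinj _ _ ?_ }, hn0, fun a => hpinj _ _ ?_⟩
  · change p (x * y) ^ d = (p x * p y) ^ d
    rw [mul_pow, hp, hp, hp, g_mul]
  · change p (x + y) ^ d = (p x + p y) ^ d
    rw [Tropical.add_pow, hp, hp, hp, g_add]
  · change p _ ^ d = _
    rw [hp, g_f, ← cfui_trop_pow, ← pow_mul, hn, mul_comm]
end

section
/- Let L be an idempotent semifield and f : ℤ_max →+* L an injective semiring homomorphism such that L is a finite extension of ℤ_max (there is a finite subset S ⊆ L such that every element of L is a finite sum of elements of the form f(a) * s with a ∈ ℤ_max, s ∈ S). Then there exist a positive integer n and a semiring isomorphism φ : L ≃+* ℤ_max such that φ (f (trop a)) = trop (n * a) for all a : ℤ; that is, every finite extension of ℤ_max is isomorphic to F^(n) for some n. -/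
open Tropical

section Helpers

theorem aux_finite_closure {M : Type*} [AddCommMonoid M] (hidem : ∀ x : M, x + x = x)
    (B : Set M) (hB : B.Finite) : (AddSubmonoid.closure B : Set M).Finite := by
  classical
  obtain ⟨B, rfl⟩ := hB.exists_finset_coe
  refine Set.Finite.subset ((B.powerset.image (fun U => ∑ x ∈ U, x)).finite_toSet) ?_
  intro z hz
  induction hz using AddSubmonoid.closure_induction_left with
  | zero => simp only [Finset.coe_image, Set.mem_image]; exact ⟨∅, by simp, by simp⟩
  | add_left b hb y hy ih =>
    simp only [Finset.coe_image, Set.mem_image] at ih ⊢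
    obtain ⟨U, hU, rfl⟩ := ih
    refine ⟨insert b U, ?_, ?_⟩
    · simp only [Finset.coe_powerset, Set.mem_preimage, Set.mem_powerset_iff] at hU ⊢
      intro x hx
      rcases Finset.mem_insert.1 (Finset.mem_coe.1 hx) with rfl | h
      · exact hb
      · exact hU h
    · by_cases h : b ∈ U
      · rw [Finset.insert_eq_of_mem h, ← Finset.add_sum_erase U _ h, ← add_assoc, hidem]
      · rw [Finset.sum_insert h]

variable {L : Type*} [Semifield L] [PartialOrder L] [IsOrderedMonoid L]

theorem aux_zero_le (hle : ∀ x y : L, x ≤ y ↔ x + y = y) (x : L) : 0 ≤ x := by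
  rw [hle, zero_add]

theorem aux_idem (hle : ∀ x y : L, x ≤ y ↔ x + y = y) (x : L) : x + x = x :=
  (hle x x).1 le_rfl

theorem aux_le_left (hle : ∀ x y : L, x ≤ y ↔ x + y = y) (x y : L) : x ≤ x + y := by
  rw [hle, ← add_assoc, aux_idem hle]

theorem aux_le_right (hle : ∀ x y : L, x ≤ y ↔ x + y = y) (x y : L) : y ≤ x + y := by
  rw [add_comm]; exact aux_le_left hle y x

theorem aux_sup_le (hle : ∀ x y : L, x ≤ y ↔ x + y = y) {x y z : L} (h : x ≤ z) (h' : y ≤ z) :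
    x + y ≤ z := by
  rw [hle] at *
  rw [add_assoc, h', h]

theorem aux_pos (hle : ∀ x y : L, x ≤ y ↔ x + y = y) {x y : L} (hx : x ≠ 0) (h : x ≤ y) :
    y ≠ 0 := by
  rintro rfl
  exact hx (le_antisymm h (aux_zero_le hle x))

theorem aux_cancel {x y z : L} (hz : z ≠ 0) (h : z * x ≤ z * y) : x ≤ y := by
  have := mul_le_mul_right h z⁻¹
  rwa [inv_mul_cancel_left₀ hz, inv_mul_cancel_left₀ hz] at this

/-- bound on powers of `1 + x`. -/
theorem aux_pow_bound (hle : ∀ x y : L, x ≤ y ↔ x + y = y) (x c : L) (m : ℕ)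
    (h : ∀ i ≤ m, x ^ i ≤ c) : (1 + x) ^ m ≤ c := by
  have key : ∀ m : ℕ, ∀ c : L, (∀ i ≤ m, x ^ i ≤ c) → (1 + x) ^ m ≤ c := by
    intro m
    induction m with
    | zero => intro c h; simpa using h 0 le_rfl
    | succ m ih =>
      intro c h
      by_cases hx : x = 0
      · subst hx; simpa using h 0 (by omega)
      rw [pow_succ, mul_add, mul_one]
      refine aux_sup_le hle (ih c fun i hi => h i (by omega)) ?_
      have := ih (c * x⁻¹) (fun i hi => by
        have := mul_le_mul_left (h (i+1) (by omega)) x⁻¹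
        rwa [pow_succ, mul_inv_cancel_right₀ hx] at this)
      have := mul_le_mul_left this x
      rwa [inv_mul_cancel_right₀ hx] at this
  exact key m c h

theorem aux_pow_le_one (hle : ∀ x y : L, x ≤ y ↔ x + y = y) (x : L) (m : ℕ) (hm : 0 < m)
    (h : x ^ m ≤ 1) : x ≤ 1 := by
  obtain ⟨m, rfl⟩ : ∃ k, m = k + 1 := ⟨m - 1, by omega⟩
  have h1 : (1 : L) ≤ 1 + x := aux_le_left hle _ _
  have hx1 : x ≤ 1 + x := aux_le_right hle _ _
  have h2 : (1 + x) ^ (m + 1) ≤ (1 + x) ^ m := by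
    apply aux_pow_bound hle
    intro i hi
    rcases Nat.lt_or_ge i (m + 1) with h' | h'
    · exact (pow_le_pow_left' hx1 i).trans (pow_le_pow_right' h1 (by omega))
    · obtain rfl : i = m + 1 := by omega
      exact h.trans (one_le_pow_of_one_le' h1 m)
  have h3 : (1 + x) ^ m ≠ 0 := pow_ne_zero _ (aux_pos hle one_ne_zero h1)
  have h4 : (1 + x) ≤ 1 := by
    apply aux_cancel h3
    rwa [mul_one, ← pow_succ]
  exact hx1.trans h4

theorem aux_inv_le {x y : L} (hx : x ≠ 0) (hy : y ≠ 0) (h : x ≤ y) : y⁻¹ ≤ x⁻¹ := by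
  apply aux_cancel hx
  apply aux_cancel hy
  rw [mul_inv_cancel₀ hx, mul_one, mul_comm x, mul_inv_cancel_left₀ hy]
  exact h

/-- abstract version in terms of `e k = f (trop (-k))`. -/
theorem aux_core (hle : ∀ x y : L, x ≤ y ↔ x + y = y) (e : ℤ → L)
    (he0 : e 0 = 1) (hadd : ∀ a b, e (a + b) = e a * e b) (hmono : Monotone e)
    (hinj : Function.Injective e) (S : Finset L)
    (hS : ∀ x : L, x ∈ AddSubmonoid.closure {y : L | y = 0 ∨ ∃ a : ℤ, ∃ s ∈ S, y = e a * s}) :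
    ∃ p : L, 1 < p ∧ ∀ x : L, x ≠ 0 → ∃ k : ℤ, x = p ^ k := by
  classical
  have hene : ∀ a, e a ≠ 0 := fun a h => by
    have := hadd a (-a)
    rw [add_neg_cancel, he0, h, zero_mul] at this
    exact one_ne_zero this
  have heinv : ∀ a, (e a)⁻¹ = e (-a) := fun a => by
    apply inv_eq_of_mul_eq_one_right
    rw [← hadd, add_neg_cancel, he0]
  -- every element is below a multiple of the sum of the generators
  obtain ⟨σ, hσ⟩ : ∃ σ, σ = ∑ s ∈ S, s := ⟨_, rfl⟩
  have hsσ : ∀ s ∈ S, s ≤ σ := fun s hs => by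
    rw [hσ, ← Finset.add_sum_erase S _ hs]; exact aux_le_left hle _ _
  have b1 : ∀ x : L, ∃ k : ℤ, x ≤ e k * σ := by
    intro x
    induction hS x using AddSubmonoid.closure_induction with
    | mem x hx =>
      rcases hx with rfl | ⟨a, s, hs, rfl⟩
      · exact ⟨0, aux_zero_le hle _⟩
      · exact ⟨a, mul_le_mul_right (hsσ s hs) _⟩
    | zero => exact ⟨0, aux_zero_le hle _⟩
    | add x y _ _ hx hy =>
      obtain ⟨k, hk⟩ := hx
      obtain ⟨l, hl⟩ := hy
      exact ⟨max k l, aux_sup_le hle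
        (hk.trans (mul_le_mul_left (hmono (le_max_left _ _)) _))
        (hl.trans (mul_le_mul_left (hmono (le_max_right _ _)) _))⟩
  have hσ0 : σ ≠ 0 := by
    obtain ⟨k, hk⟩ := b1 1
    have := aux_pos hle one_ne_zero hk
    exact right_ne_zero_of_mul this
  have b2 : ∀ x : L, ∃ k : ℤ, x ≤ e k := by
    intro x
    obtain ⟨k, hk⟩ := b1 (σ * x)
    exact ⟨k, aux_cancel hσ0 (by rwa [mul_comm σ (e k)])⟩
  have b3 : ∀ x : L, x ≠ 0 → ∃ k : ℤ, e (-k) ≤ x := by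
    intro x hx
    obtain ⟨k, hk⟩ := b2 x⁻¹
    refine ⟨k, ?_⟩
    rw [← heinv]
    simpa using aux_inv_le (inv_ne_zero hx) (hene k) hk
  -- uniform bound
  obtain ⟨C, hC0, hC⟩ : ∃ C : ℤ, 0 ≤ C ∧ ∀ s ∈ S, s ≠ 0 → e (-C) ≤ s ∧ s ≤ e C := by
    choose! k hk using b3
    obtain ⟨c, hc⟩ := b2 σ
    obtain ⟨M, hM⟩ := (S.image k).exists_le
    refine ⟨max 0 (max c M), le_max_left _ _, fun s hs h0 => ⟨?_, ?_⟩⟩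
    · refine (hmono ?_).trans (hk s h0)
      have := hM (k s) (Finset.mem_image_of_mem _ hs)
      have : M ≤ max 0 (max c M) := by simp
      linarith
    · exact ((hsσ s hs).trans hc).trans (hmono (by simp))
  have b4 : ∀ x : L, x = 0 ∨ ∃ k : ℤ, e (k - C) ≤ x ∧ x ≤ e (k + C) := by
    intro x
    induction hS x using AddSubmonoid.closure_induction with
    | mem x hx =>
      rcases hx with rfl | ⟨a, s, hs, rfl⟩
      · exact Or.inl rfl
      · by_cases h0 : s = 0
        · left; rw [h0, mul_zero]
        · right
          refine ⟨a, ?_, ?_⟩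
          · rw [sub_eq_add_neg, hadd]; exact mul_le_mul_right (hC s hs h0).1 _
          · rw [hadd]; exact mul_le_mul_right (hC s hs h0).2 _
    | zero => exact Or.inl rfl
    | add x y _ _ hx hy =>
      rcases hx with rfl | ⟨k, hk1, hk2⟩
      · rwa [zero_add]
      rcases hy with rfl | ⟨l, hl1, hl2⟩
      · rw [add_zero]; exact Or.inr ⟨k, hk1, hk2⟩
      right
      rcases le_total k l with h | h
      · exact ⟨l, hl1.trans (aux_le_right hle _ _),
          aux_sup_le hle (hk2.trans (hmono (by omega))) hl2⟩
      · exact ⟨k, hk1.trans (aux_le_left hle _ _),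
          aux_sup_le hle hk2 (hl2.trans (hmono (by omega)))⟩
  -- finiteness of intervals
  have fin : ∀ D : ℤ, {z : L | 1 ≤ z ∧ z ≤ e D}.Finite := by
    intro D
    let B : Set L := insert 1 ((fun q : ℤ × L => e q.1 * q.2) '' (Set.Icc (-C) (D + C) ×ˢ (S : Set L)))
    have hB : B.Finite :=
      (((Set.finite_Icc _ _).prod S.finite_toSet).image _).insert _
    refine (aux_finite_closure (aux_idem hle) B hB).subset ?_
    rintro z ⟨hz1, hz2⟩
    have h1B : (1 : L) ∈ AddSubmonoid.closure B :=
      AddSubmonoid.subset_closure (Set.mem_insert _ _)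
    have key : ∀ z : L, z ≤ e D → 1 + z ∈ AddSubmonoid.closure B := by
      intro z
      induction hS z using AddSubmonoid.closure_induction with
      | mem x hx =>
        intro hxD
        rcases hx with rfl | ⟨a, s, hs, rfl⟩
        · rwa [add_zero]
        · by_cases h0 : s = 0
          · rw [h0, mul_zero, add_zero]; exact h1B
          obtain ⟨hs1, hs2⟩ := hC s hs h0
          by_cases ha : a < -C
          · have : e a * s ≤ 1 := by
              refine (mul_le_mul_right hs2 _).trans ?_
              rw [← hadd, ← he0]
              exact hmono (by omega)
            rw [add_comm, (hle _ _).1 this]; exact h1B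
          · have : a ≤ D + C := by
              have h2 : e (a - C) ≤ e D := by
                refine le_trans ?_ hxD
                rw [sub_eq_add_neg, hadd]; exact mul_le_mul_right hs1 _
              have := (hmono.strictMono_of_injective hinj).le_iff_le.1 h2
              omega
            refine add_mem h1B (AddSubmonoid.subset_closure (Set.mem_insert_of_mem _ ?_))
            exact ⟨(a, s), ⟨⟨by omega, this⟩, hs⟩, rfl⟩
      | zero => intro _; rwa [add_zero]
      | add x y _ _ hx hy =>
        intro h
        have h1 := hx ((aux_le_left hle _ _).trans h)
        have h2 := hy ((aux_le_right hle _ _).trans h)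
        have := add_mem h1 h2
        rwa [add_add_add_comm, aux_idem hle] at this
    have := key z hz2
    rwa [(hle _ _).1 hz1] at this
  -- archimedean
  have arch : ∀ (y : L) (D : ℤ), 1 ≤ y → (∀ m : ℕ, y ^ m ≤ e D) → y = 1 := by
    intro y D hy h
    have hni : ¬ Function.Injective (fun m : ℕ => y ^ m) := by
      intro hi
      refine Set.infinite_range_of_injective hi ((fin D).subset ?_)
      rintro _ ⟨m, rfl⟩
      exact ⟨one_le_pow_of_one_le' hy m, h m⟩
    have hy0 : y ≠ 0 := aux_pos hle one_ne_zero hy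
    have key : ∀ i j : ℕ, i < j → y ^ i = y ^ j → y = 1 := by
      intro i j hij hp
      refine le_antisymm ?_ hy
      apply aux_cancel (pow_ne_zero i hy0)
      rw [mul_one, ← pow_succ, hp]
      exact pow_le_pow_right' hy hij
    simp only [Function.Injective, not_forall] at hni
    obtain ⟨i, j, hp, hne⟩ := hni
    rcases lt_or_gt_of_ne hne with h | h
    · exact key i j h hp
    · exact key j i h hp.symm
  have tot : ∀ x : L, x ≤ 1 ∨ 1 ≤ x := by
    intro x
    by_cases hx : x = 0
    · left; rw [hx]; exact aux_zero_le hle _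
    have b5 : ∀ m : ℕ, ∃ k : ℤ, e (k - C) ≤ x ^ m ∧ x ^ m ≤ e (k + C) := fun m =>
      (b4 (x ^ m)).resolve_left (pow_ne_zero m hx)
    choose k hk1 hk2 using b5
    by_cases h1 : ∃ m : ℕ, 0 < m ∧ C ≤ k m
    · obtain ⟨m, hm, hkm⟩ := h1
      right
      have h3 : 1 ≤ x ^ m := by
        refine le_trans ?_ (hk1 m)
        rw [← he0]; exact hmono (by omega)
      have h4 : x⁻¹ ^ m ≤ 1 := by
        rw [inv_pow]
        simpa using aux_inv_le one_ne_zero (pow_ne_zero m hx) h3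
      have h5 := aux_pow_le_one hle _ m hm h4
      simpa using aux_inv_le (inv_ne_zero hx) one_ne_zero h5
    · left
      push Not at h1
      have h6 : 1 + x = 1 := by
        apply arch (1 + x) (2 * C) (aux_le_left hle _ _)
        intro m
        apply aux_pow_bound hle
        intro i _
        rcases Nat.eq_zero_or_pos i with rfl | hi
        · rw [pow_zero, ← he0]; exact hmono (by omega)
        · refine (hk2 i).trans (hmono ?_)
          have := h1 i hi
          omega
      rw [hle, add_comm]; exact h6
  have tot2 : ∀ x y : L, x ≤ y ∨ y ≤ x := by
    intro x y
    by_cases hx : x = 0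
    · left; rw [hx]; exact aux_zero_le hle _
    rcases tot (x⁻¹ * y) with h | h
    · right
      have := mul_le_mul_right h x
      rwa [mul_inv_cancel_left₀ hx, mul_one] at this
    · left
      have := mul_le_mul_right h x
      rwa [mul_inv_cancel_left₀ hx, mul_one] at this
  -- least element above one
  have hu : 1 < e 1 := by
    rw [← he0]; exact (hmono.strictMono_of_injective hinj) (by omega)
  obtain ⟨p, hp, hpmin⟩ : ∃ p : L, 1 < p ∧ ∀ y : L, 1 < y → y ≤ p → y = p := by
    have hfin1 : {z : L | 1 < z ∧ z ≤ e 1}.Finite :=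
      (fin 1).subset fun z hz => ⟨hz.1.le, hz.2⟩
    obtain ⟨p, hp⟩ := hfin1.exists_minimal ⟨e 1, hu, le_rfl⟩
    refine ⟨p, hp.1.1, fun y hy hyp => le_antisymm hyp (hp.2 ⟨hy, hyp.trans hp.1.2⟩ hyp)⟩
  have hp0 : p ≠ 0 := aux_pos hle one_ne_zero hp.le
  have pos_case : ∀ x : L, 1 ≤ x → ∃ k : ℕ, x = p ^ k := by
    intro x hx
    have hex : ∃ m : ℕ, x ≤ p ^ m := by
      by_contra hcon
      push Not at hcon
      obtain ⟨D, hD⟩ := b2 x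
      refine hp.ne' (arch p D hp.le fun m => ?_)
      exact ((tot2 x (p ^ m)).resolve_left (hcon m)).trans hD
    refine ⟨Nat.find hex, ?_⟩
    have h1 := Nat.find_spec hex
    rcases Nat.eq_zero_or_pos (Nat.find hex) with h0 | h0
    · rw [h0, pow_zero] at h1 ⊢
      exact le_antisymm h1 hx
    · obtain ⟨j, hj⟩ : ∃ j, Nat.find hex = j + 1 := ⟨Nat.find hex - 1, by omega⟩
      have h2 : ¬ x ≤ p ^ j := Nat.find_min hex (by omega)
      rw [hj] at h1 ⊢
      have hpj : p ^ j ≠ 0 := pow_ne_zero j hp0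
      have h3 : (p ^ j)⁻¹ * x = p := by
        apply hpmin
        · refine lt_of_le_not_ge ?_ ?_
          · apply aux_cancel hpj
            rw [mul_one, mul_inv_cancel_left₀ hpj]
            exact (tot2 _ _).resolve_left h2
          · intro h
            apply h2
            have := mul_le_mul_right h (p ^ j)
            rwa [mul_one, mul_inv_cancel_left₀ hpj] at this
        · apply aux_cancel hpj
          rwa [mul_inv_cancel_left₀ hpj, ← pow_succ]
      have h4 := mul_inv_cancel_left₀ hpj x
      rw [h3, ← pow_succ] at h4
      exact h4.symm
  refine ⟨p, hp, fun x hx => ?_⟩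
  rcases tot x with h | h
  · obtain ⟨k, hk⟩ := pos_case x⁻¹ (by simpa using aux_inv_le hx one_ne_zero h)
    refine ⟨-k, ?_⟩
    rw [zpow_neg, zpow_natCast, ← hk, inv_inv]
  · obtain ⟨k, hk⟩ := pos_case x h
    exact ⟨k, by rw [zpow_natCast]; exact hk⟩

theorem aux_main (hle : ∀ x y : L, x ≤ y ↔ x + y = y)
    (f : Tropical (WithTop ℤ) →+* L) (hf : Function.Injective f)
    (hfin : ∃ S : Finset L, ∀ x : L,
      x ∈ AddSubmonoid.closure {y : L | ∃ a : Tropical (WithTop ℤ), ∃ s ∈ S, y = f a * s}) :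
    ∃ (n : ℕ) (φ : L ≃+* Tropical (WithTop ℤ)), 0 < n ∧
      ∀ a : ℤ, φ (f (trop (a : WithTop ℤ))) = trop (((n : ℤ) * a : ℤ) : WithTop ℤ) := by
  obtain ⟨S, hS⟩ := hfin
  have hadd : ∀ a b : ℤ, f (trop ((a + b : ℤ) : WithTop ℤ)) =
      f (trop (a : WithTop ℤ)) * f (trop (b : WithTop ℤ)) := fun a b => by
    rw [← map_mul, ← Tropical.trop_add, ← WithTop.coe_add]
  have h0 : f (trop ((0 : ℤ) : WithTop ℤ)) = 1 := by
    rw [WithTop.coe_zero, Tropical.trop_zero, map_one]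
  have htopz : (trop (⊤ : WithTop ℤ)) = 0 := rfl
  have hanti : ∀ a b : ℤ, a ≤ b → f (trop (b : WithTop ℤ)) ≤ f (trop (a : WithTop ℤ)) := by
    intro a b hab
    rw [hle, ← map_add]
    congr 1
    apply Tropical.add_eq_right
    rw [← Tropical.untrop_le_iff]
    exact WithTop.coe_le_coe.2 hab
  have hinj : ∀ a b : ℤ, f (trop (a : WithTop ℤ)) = f (trop (b : WithTop ℤ)) → a = b := by
    intro a b h
    have := Tropical.trop_injective (hf h)
    exact_mod_cast this
  obtain ⟨p, hp, hall⟩ := aux_core hle (fun k : ℤ => f (trop ((-k : ℤ) : WithTop ℤ)))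
    (by simpa using h0) (fun a b => by rw [← hadd, neg_add])
    (fun a b hab => hanti _ _ (by omega)) (fun a b h => by have := hinj _ _ h; omega) S
    (fun x => by
      refine AddSubmonoid.closure_mono ?_ (hS x)
      rintro y ⟨a, s, hs, rfl⟩
      induction a using Tropical.tropRec with
      | h a =>
        induction a using WithTop.recTopCoe with
        | top => left; rw [htopz, map_zero, zero_mul]
        | coe a => exact Or.inr ⟨-a, s, hs, by simp⟩)
  have hp0 : p ≠ 0 := aux_pos hle one_ne_zero hp.le
  obtain ⟨q, hq⟩ : ∃ q, q = p⁻¹ := ⟨_, rfl⟩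
  have hq0 : q ≠ 0 := by rw [hq]; exact inv_ne_zero hp0
  have hq1 : q ≤ 1 := by rw [hq]; simpa using aux_inv_le one_ne_zero hp0 hp.le
  have hqne : q ≠ 1 := by rw [hq]; simpa using hp.ne'
  have hqall : ∀ x : L, x ≠ 0 → ∃ k : ℤ, x = q ^ k := by
    intro x hx
    obtain ⟨k, hk⟩ := hall x hx
    exact ⟨-k, by rw [hq, inv_zpow, zpow_neg, inv_inv]; exact hk⟩
  have hqanti : ∀ k l : ℤ, k ≤ l → q ^ l ≤ q ^ k := by
    intro k l hkl
    obtain ⟨j, rfl⟩ := Int.le.dest hkl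
    rw [zpow_add₀ hq0, zpow_natCast]
    simpa using mul_le_mul_right (pow_le_one' hq1 j) (q ^ k)
  have hqpos : ∀ k : ℤ, 1 ≤ q ^ k → k ≤ 0 := by
    intro k hk
    by_contra hcon
    have h1 := hqanti 1 k (by omega)
    rw [zpow_one] at h1
    exact hqne (le_antisymm hq1 (hk.trans h1))
  have hqle : ∀ k l : ℤ, q ^ k ≤ q ^ l → l ≤ k := by
    intro k l h
    have : 1 ≤ q ^ (l - k) := by
      apply aux_cancel (zpow_ne_zero k hq0)
      rw [← zpow_add₀ hq0, mul_one]
      simpa using h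
    have := hqpos _ this
    omega
  let ψ : Tropical (WithTop ℤ) →+* L :=
    { toFun := fun t => WithTop.recTopCoe (C := fun _ => L) 0 (fun k : ℤ => q ^ k) (untrop t)
      map_one' := zpow_zero q
      map_zero' := rfl
      map_mul' := by
        intro s t
        induction s using Tropical.tropRec with
        | h s =>
        induction t using Tropical.tropRec with
        | h t =>
        rw [← Tropical.trop_add]
        simp only [untrop_trop]
        induction s using WithTop.recTopCoe with
        | top => simp
        | coe s =>
          induction t using WithTop.recTopCoe with
          | top => simp
          | coe t =>
            rw [← WithTop.coe_add]
            simp only [WithTop.recTopCoe_coe]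
            exact zpow_add₀ hq0 s t
      map_add' := by
        intro s t
        induction s using Tropical.tropRec with
        | h s =>
        induction t using Tropical.tropRec with
        | h t =>
        rw [Tropical.untrop_add]
        simp only [untrop_trop]
        induction s using WithTop.recTopCoe with
        | top => simp
        | coe s =>
          induction t using WithTop.recTopCoe with
          | top => simp
          | coe t =>
            rw [← WithTop.coe_min]
            simp only [WithTop.recTopCoe_coe]
            rcases le_total s t with h | h
            · rw [min_eq_left h, add_comm, (hle _ _).1 (hqanti _ _ h)]
            · rw [min_eq_right h, (hle _ _).1 (hqanti _ _ h)] }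
  have hψ : ∀ k : ℤ, ψ (trop (k : WithTop ℤ)) = q ^ k := fun k => rfl
  have hψt : ψ (trop ⊤) = 0 := rfl
  have hbij : Function.Bijective ψ := by
    constructor
    · intro s t
      induction s using Tropical.tropRec with
      | h s =>
      induction t using Tropical.tropRec with
      | h t =>
      induction s using WithTop.recTopCoe with
      | top =>
        induction t using WithTop.recTopCoe with
        | top => intro _; rfl
        | coe t => intro h; rw [hψ, hψt] at h; exact absurd h.symm (zpow_ne_zero _ hq0)
      | coe s =>
        induction t using WithTop.recTopCoe with
        | top => intro h; rw [hψ, hψt] at h; exact absurd h (zpow_ne_zero _ hq0)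
        | coe t =>
          intro h
          rw [hψ, hψ] at h
          rw [le_antisymm (hqle t s h.ge) (hqle s t h.le)]
    · intro x
      by_cases hx : x = 0
      · exact ⟨trop ⊤, by rw [hψt, hx]⟩
      · obtain ⟨k, hk⟩ := hqall x hx
        exact ⟨trop k, by rw [hψ, hk]⟩
  have hf1 : f (trop ((1 : ℤ) : WithTop ℤ)) ≠ 0 := by
    intro h
    have := hadd 1 (-1)
    rw [h, zero_mul, add_neg_cancel, h0] at this
    exact one_ne_zero this
  obtain ⟨n, hn⟩ := hqall _ hf1
  have hn0 : 0 < n := by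
    by_contra hcon
    have h1 : (1 : L) ≤ q ^ n := by
      have := hqanti n 0 (by omega)
      rwa [zpow_zero] at this
    have h2 := hanti 0 1 (by omega)
    rw [hn, h0] at h2
    have h3 := le_antisymm h2 h1
    rw [← hn, ← h0] at h3
    have := hinj _ _ h3
    omega
  have hfa : ∀ a : ℤ, f (trop (a : WithTop ℤ)) = q ^ (n * a) := by
    intro a
    induction a using Int.induction_on with
    | zero => rw [h0, mul_zero, zpow_zero]
    | succ i ih => rw [hadd, ih, hn, mul_add, zpow_add₀ hq0, mul_one]
    | pred i ih =>
      have h4 := hadd (-(i : ℤ) - 1) 1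
      rw [sub_add_cancel, ih, hn] at h4
      have h5 : q ^ (n * -(i : ℤ)) = q ^ (n * (-(i : ℤ) - 1)) * q ^ n := by
        rw [← zpow_add₀ hq0]; congr 1; ring
      rw [h5] at h4
      exact (mul_right_cancel₀ (zpow_ne_zero n hq0) h4).symm
  lift n to ℕ using hn0.le
  refine ⟨n, (RingEquiv.ofBijective ψ hbij).symm, by exact_mod_cast hn0, fun a => ?_⟩
  rw [RingEquiv.symm_apply_eq]
  exact (hfa a).trans (hψ _).symm

end Helpers

/-- Every finite extension of `ℤ_max` is isomorphic to `F^(n)` for some positive integer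
`n`: if `L` is an idempotent semifield and `f : ℤ_max →+* L` an injective semiring
homomorphism making `L` a finitely generated semimodule over `ℤ_max`, then there is a
semiring isomorphism `φ : L ≃+* ℤ_max` with `φ (f (trop a)) = trop (n * a)` for all
`a : ℤ`. -/
theorem classification_of_finite_extensions {L : Type*} [Semifield L]
    (hidem : ∀ x : L, x + x = x)
    (f : Tropical (WithTop ℤ) →+* L) (hf : Function.Injective f)
    (hfin : ∃ S : Finset L, ∀ x : L,
      x ∈ AddSubmonoid.closure {y : L | ∃ a : Tropical (WithTop ℤ), ∃ s ∈ S, y = f a * s}) :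
    ∃ (n : ℕ) (φ : L ≃+* Tropical (WithTop ℤ)), 0 < n ∧
      ∀ a : ℤ, φ (f (trop (a : WithTop ℤ))) = trop (((n : ℤ) * a : ℤ) : WithTop ℤ) := by
  letI : PartialOrder L :=
    { le := fun x y => x + y = y
      le_refl := hidem
      le_trans := fun x y z hxy hyz => by
        change x + y = y at hxy
        change y + z = z at hyz
        change x + z = z
        rw [← hyz, ← add_assoc, hxy]
      le_antisymm := fun x y hxy hyx => by
        change x + y = y at hxy
        change y + x = x at hyx
        rw [← hyx, add_comm, hxy] }
  haveI : IsOrderedMonoid L :=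
    { mul_le_mul_left := fun x y hxy z => by
        change x + y = y at hxy
        change x * z + y * z = y * z
        rw [← add_mul, hxy] }
  exact aux_main (fun _ _ => Iff.rfl) f hf hfin
end

section
/- Let D be a (not necessarily commutative) division semiring with idempotent addition which is selective (for all x, y ∈ D, x + y = x or x + y = y). If x, y ∈ D and n is a positive integer such that x^n + y^n = y^n, then x + y = y. -/
/-- Let `D` be a (not necessarily commutative) division semiring with idempotent addition
which is selective.  If `x, y ∈ D` and `n` is a positive integer with
`x ^ n + y ^ n = y ^ n`, then `x + y = y`. -/
theorem selective_monotonic_division {D : Type*} [DivisionSemiring D]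
    (hidem : ∀ x : D, x + x = x)
    (hsel : ∀ x y : D, x + y = x ∨ x + y = y)
    (x y : D) (n : ℕ) (hn : 0 < n) (h : x ^ n + y ^ n = y ^ n) : x + y = y := by
  rcases hsel x y with hx | hy
  swap
  · exact hy
  by_cases hx0 : x = 0
  · rw [hx0, zero_add]
  have step : ∀ k : ℕ, y ^ k + x ^ k = x ^ k →
      y ^ (k + 1) + x ^ k * y = x ^ k * y ∧ x ^ k * y + x ^ (k + 1) = x ^ (k + 1) := by
    intro k hk
    constructor
    · rw [pow_succ, ← add_mul, hk]
    · rw [pow_succ, ← mul_add, add_comm y x, hx]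
  have mono : ∀ k : ℕ, y ^ k + x ^ k = x ^ k := by
    intro k
    induction k with
    | zero => simp only [pow_zero]; exact hidem 1
    | succ k ih =>
      obtain ⟨h1, h2⟩ := step k ih
      rw [← h2, ← add_assoc, h1]
  obtain ⟨k, rfl⟩ : ∃ k, n = k + 1 := ⟨n - 1, by omega⟩
  have heq : y ^ (k + 1) = x ^ (k + 1) := by
    rw [← h, add_comm, mono]
  obtain ⟨h1, h2⟩ := step k (mono k)
  rw [heq] at h1
  have h3 : x ^ k * y = x ^ k * x := by
    rw [← pow_succ, ← h2, add_comm, h1]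
  have h4 : y = x := mul_left_cancel₀ (pow_ne_zero k hx0) h3
  rw [h4]
  exact hidem x
end

section
/- Let D be a (not necessarily commutative) division semiring with idempotent addition, and let f : ℤ_max →+* D be an injective semiring homomorphism whose range lies in the center of D, such that D is finite as a left semimodule over ℤ_max via f (there is a finite subset S ⊆ D such that every element of D is a finite sum of elements of the form f(a) * s with a ∈ ℤ_max, s ∈ S). Then D is commutative, and there exist a positive integer n and a semiring isomorphism φ : D ≃+* ℤ_max such that φ (f (trop a)) = trop (n * a) for all a : ℤ; that is, every finite division semialgebra over ℤ_max is F^(n) for some n. -/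
open Tropical

namespace DivSA

/-- The canonical order of an idempotent addition. -/
def le {D : Type*} [Add D] (x y : D) : Prop := x + y = y

section basic
variable {D : Type*} [DivisionSemiring D]

lemma le.trans {x y z : D} (h : le x y) (k : le y z) : le x z := by
  unfold le at *
  rw [← k, ← add_assoc, h]

lemma le.antisymm {x y : D} (h : le x y) (k : le y x) : x = y := by
  unfold le at *
  rw [← k, add_comm, h]

lemma le.mul_left {x y : D} (c : D) (h : le x y) : le (c * x) (c * y) := by
  unfold le at *
  rw [← mul_add, h]

lemma le.mul_right {x y : D} (c : D) (h : le x y) : le (x * c) (y * c) := by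
  unfold le at *
  rw [← add_mul, h]

lemma le.mul {x y a b : D} (h : le x y) (k : le a b) : le (x * a) (y * b) :=
  (h.mul_right a).trans (k.mul_left y)

lemma le.add {x y z : D} (h : le x z) (k : le y z) : le (x + y) z := by
  unfold le at *
  rw [add_assoc, k, h]

lemma zero_le (x : D) : le 0 x := zero_add x

lemma le_add_left (hidem : ∀ x : D, x + x = x) (x y : D) : le x (x + y) := by
  unfold le
  rw [← add_assoc, hidem]

lemma le_add_right (hidem : ∀ x : D, x + x = x) (x y : D) : le y (x + y) := by
  rw [add_comm]; exact le_add_left hidem y x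

lemma le.pow (hidem : ∀ x : D, x + x = x) {x y : D} (h : le x y) (n : ℕ) :
    le (x ^ n) (y ^ n) := by
  induction n with
  | zero => simpa [le] using hidem 1
  | succ n ih => rw [pow_succ, pow_succ]; exact ih.mul h

lemma one_le_pow (hidem : ∀ x : D, x + x = x) {x : D} (h : le 1 x) (n : ℕ) : le 1 (x ^ n) := by
  simpa using h.pow hidem n

lemma le_inv {x : D} (hx : x ≠ 0) (h : le x 1) : le 1 x⁻¹ := by
  simpa [hx] using h.mul_right x⁻¹

lemma inv_le {x : D} (hx : x ≠ 0) (h : le 1 x) : le x⁻¹ 1 := by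
  simpa [hx] using h.mul_right x⁻¹

lemma eq_one_of_pow (hidem : ∀ x : D, x + x = x) {x : D} (h : le 1 x) {n : ℕ} (hn : 0 < n)
    (hx : x ^ n = 1) : x = 1 := by
  refine le.antisymm ?_ h
  obtain ⟨k, rfl⟩ : ∃ k, n = k + 1 := ⟨n - 1, by omega⟩
  have := (one_le_pow hidem h k).mul_right x
  rwa [← pow_succ, hx, one_mul] at this

lemma ne_zero_of_one_le {x : D} (h : le 1 x) : x ≠ 0 := by
  rintro rfl
  simp [le] at h

lemma eq_one_of_finite (hidem : ∀ x : D, x + x = x) {x : D} (h : le 1 x) {A : Set D}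
    (hA : A.Finite) (hx : ∀ n : ℕ, x ^ n ∈ A) : x = 1 := by
  obtain ⟨i, -, j, -, hij, e⟩ := Set.infinite_univ.exists_ne_map_eq_of_mapsTo
    (f := fun n : ℕ => x ^ n) (t := A) (fun n _ => hx n) hA
  have h0 := ne_zero_of_one_le h
  have key : ∀ i j : ℕ, i < j → x ^ i = x ^ j → x = 1 := by
    intro i j hij e
    refine eq_one_of_pow hidem h (n := j - i) (by omega) ?_
    have : x ^ j = x ^ i * x ^ (j - i) := by rw [← pow_add]; congr 1; omega
    rw [this] at e
    exact (mul_right_eq_self₀.1 e.symm).resolve_right (pow_ne_zero _ h0)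
  rcases lt_or_gt_of_ne hij with h | h
  · exact key _ _ h e
  · exact key _ _ h e.symm

lemma pow_add_eq_one (hidem : ∀ x : D, x + x = x) {p q : D} (h : p + q = 1) (n : ℕ) :
    p ^ n + q = 1 := by
  have hp : le p 1 := by rw [← h]; exact le_add_left hidem _ _
  have hq : le q 1 := by rw [← h]; exact le_add_right hidem _ _
  induction n with
  | zero => rw [pow_zero, add_comm]; exact hq
  | succ n ih =>
    have h1 : le (p ^ n * q) q := by
      simpa using (hp.pow hidem n).mul_right q
    calc p ^ (n+1) + q = p ^ (n+1) + (p ^ n * q + q) := by rw [h1]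
      _ = p ^ n * (p + q) + q := by rw [mul_add, pow_succ, add_assoc]
      _ = 1 := by rw [h, mul_one, ih]

lemma sum_finset_le (hidem : ∀ x : D, x + x = x) {V W : Finset D} (h : V ⊆ W) :
    le (∑ x ∈ V, x) (∑ x ∈ W, x) := by
  classical
  rw [← Finset.sum_sdiff h]
  exact le_add_right hidem _ _

lemma sum_union (hidem : ∀ x : D, x + x = x) [DecidableEq D] (V W : Finset D) :
    ∑ x ∈ V ∪ W, x = ∑ x ∈ V, x + ∑ x ∈ W, x := by
  rw [← Finset.sum_union_inter, add_comm]
  exact (sum_finset_le hidem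
    (Finset.inter_subset_left.trans Finset.subset_union_left)).symm

lemma exists_least (hidem : ∀ x : D, x + x = x) (htot : ∀ x y : D, le x y ∨ le y x)
    {A : Set D} (hA : A.Finite) : A.Nonempty → ∃ g ∈ A, ∀ x ∈ A, le g x := by
  induction A, hA using Set.Finite.induction_on with
  | empty => intro h; exact absurd h (by simp)
  | @insert a s _ _ ih =>
    intro _
    by_cases hs : s.Nonempty
    · obtain ⟨g, hg, h⟩ := ih hs
      rcases htot a g with k | k
      · refine ⟨a, by simp, ?_⟩
        rintro x (rfl | hx)
        · exact hidem x
        · exact k.trans (h x hx)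
      · refine ⟨g, by simp [hg], ?_⟩
        rintro x (rfl | hx)
        · exact k
        · exact h x hx
    · rw [Set.not_nonempty_iff_eq_empty] at hs
      subst hs
      exact ⟨a, by simp, by simpa [le] using hidem a⟩

/-- The comparison map from `ℤ_max`. -/
def psi (h : D) : WithTop ℤ → D
  | ⊤ => 0
  | (n : ℤ) => h ^ n

lemma psi_top (h : D) : psi h ⊤ = 0 := rfl
lemma psi_coe (h : D) (n : ℤ) : psi h (n : WithTop ℤ) = h ^ n := rfl

end basic

section main
variable {D : Type*} [DivisionSemiring D] (f : Tropical (WithTop ℤ) →+* D)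

/-- The image of the integer `j`. -/
def tz (j : ℤ) : D := f (trop (j : WithTop ℤ))

lemma tz_add (i j : ℤ) : tz f (i + j) = tz f i * tz f j := by
  unfold tz
  rw [← map_mul, ← trop_add, WithTop.coe_add]

lemma tz_zero : tz f 0 = 1 := by
  unfold tz
  rw [← map_one f]; rfl

lemma tz_ne_zero (j : ℤ) : tz f j ≠ 0 := by
  intro h
  have := tz_add f j (-j)
  rw [h, add_neg_cancel, tz_zero, zero_mul] at this
  exact one_ne_zero this

lemma tz_mul (n : ℕ) (j : ℤ) : tz f (n * j) = tz f j ^ n := by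
  induction n with
  | zero => simp [tz_zero]
  | succ n ih => rw [pow_succ, ← ih, ← tz_add]; congr 1; push_cast; ring

lemma tz_zpow (j : ℤ) : tz f j = tz f 1 ^ j := by
  obtain ⟨n, rfl | rfl⟩ := j.eq_nat_or_neg
  · simpa using tz_mul f n 1
  · rw [zpow_neg, zpow_natCast, ← tz_mul]
    refine eq_inv_of_mul_eq_one_left ?_
    rw [← tz_add]; simp [tz_zero]

lemma tz_anti {i j : ℤ} (h : i ≤ j) : le (tz f j) (tz f i) := by
  unfold tz le
  rw [← map_add, Tropical.add_eq_right]
  rw [← untrop_le_iff, untrop_trop, untrop_trop]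
  exact_mod_cast h

lemma bound (hidem : ∀ x : D, x + x = x)
    (hfin : ∃ S : Finset D, ∀ x : D,
      x ∈ AddSubmonoid.closure {y : D | ∃ a : Tropical (WithTop ℤ), ∃ s ∈ S, y = f a * s})
    (x : D) : ∃ m : ℕ, le x (tz f (-m)) := by
  classical
  obtain ⟨S, hS⟩ := hfin
  set u := ∑ s ∈ S, s with hu
  have key : ∀ x : D, ∃ m : ℕ, le x (tz f (-m) * u) := by
    intro x
    induction hS x using AddSubmonoid.closure_induction with
    | mem x hx =>
      obtain ⟨a, s, hs, rfl⟩ := hx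
      have h1 : le s u := by
        simpa using sum_finset_le hidem (Finset.singleton_subset_iff.2 hs)
      induction a using Tropical.tropRec with
      | h a =>
      induction a using WithTop.recTopCoe with
      | top => refine ⟨0, ?_⟩; rw [trop_top, map_zero, zero_mul]; exact zero_le _
      | coe j => exact ⟨(-j).toNat, (tz_anti f (i := -((-j).toNat : ℤ)) (by omega)).mul h1⟩
    | zero => exact ⟨0, zero_le _⟩
    | add x y _ _ hx hy =>
      obtain ⟨m, hm⟩ := hx
      obtain ⟨n, hn⟩ := hy
      exact ⟨m + n, (hm.trans ((tz_anti f (by push_cast; omega)).mul_right u)).add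
        (hn.trans ((tz_anti f (by push_cast; omega)).mul_right u))⟩
  have hu0 : u ≠ 0 := by
    intro h
    obtain ⟨m, hm⟩ := key 1
    rw [h, mul_zero] at hm
    exact ne_zero_of_one_le hm rfl
  obtain ⟨m, hm⟩ := key (x * u)
  refine ⟨m, ?_⟩
  have := hm.mul_right u⁻¹
  simpa [mul_assoc, hu0] using this

lemma bound' (hidem : ∀ x : D, x + x = x)
    (hfin : ∃ S : Finset D, ∀ x : D,
      x ∈ AddSubmonoid.closure {y : D | ∃ a : Tropical (WithTop ℤ), ∃ s ∈ S, y = f a * s})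
    (x : D) (hx : x ≠ 0) : ∃ m : ℕ, le (tz f m) x := by
  obtain ⟨m, hm⟩ := bound f hidem hfin x⁻¹
  refine ⟨m, ?_⟩
  have := (hm.mul_left (tz f m)).mul_right x
  rw [← tz_add, mul_assoc, inv_mul_cancel₀ hx] at this
  simpa [tz_zero] using this

lemma finite_A (hidem : ∀ x : D, x + x = x)
    (hfin : ∃ S : Finset D, ∀ x : D,
      x ∈ AddSubmonoid.closure {y : D | ∃ a : Tropical (WithTop ℤ), ∃ s ∈ S, y = f a * s}) :
    {x : D | le 1 x ∧ ¬ le (tz f (-1)) x}.Finite := by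
  classical
  have b1 := bound f hidem hfin
  have b2 := bound' f hidem hfin
  obtain ⟨S, hS⟩ := hfin
  choose m1 hm1 using b1
  have b2' : ∀ x : D, ∃ m : ℕ, x ≠ 0 → le (tz f m) x := by
    intro x
    by_cases hx : x = 0
    · exact ⟨0, fun h => absurd hx h⟩
    · obtain ⟨m, hm⟩ := b2 x hx
      exact ⟨m, fun _ => hm⟩
  choose m2 hm2 using b2'
  let U : Finset D := S.biUnion fun s =>
    (Finset.Icc (-(m2 s : ℤ)) (m1 s)).image fun j => tz f j * s
  refine ((U.powerset.image fun V => ∑ v ∈ V, v + 1).finite_toSet).subset ?_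
  rintro x ⟨h1, h2⟩
  have key : ¬ le (tz f (-1)) x → ∃ V ⊆ U, ∃ z, le z 1 ∧ x = ∑ v ∈ V, v + z := by
    clear h1 h2
    induction hS x using AddSubmonoid.closure_induction with
    | mem x hx =>
      intro h
      by_cases hx0 : x = 0
      · exact ⟨∅, by simp, 0, zero_le _, by simpa using hx0⟩
      obtain ⟨a, s, hs, rfl⟩ := hx
      have hs0 : s ≠ 0 := right_ne_zero_of_mul hx0
      induction a using Tropical.tropRec with
      | h a =>
      induction a using WithTop.recTopCoe with
      | top => simp at hx0
      | coe j =>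
        change ¬ le _ (tz f j * s) at h
        change ∃ V ⊆ U, ∃ z, le z 1 ∧ tz f j * s = _
        by_cases hj : (m1 s : ℤ) < j
        · refine ⟨∅, by simp, _, ?_, (by rw [Finset.sum_empty, zero_add])⟩
          have := (hm1 s).mul_left (tz f j)
          rw [← tz_add] at this
          refine this.trans ?_
          rw [← tz_zero f]
          exact tz_anti f (by omega)
        · refine ⟨{tz f j * s}, ?_, 0, zero_le _, by simp⟩
          rw [Finset.singleton_subset_iff]
          refine Finset.mem_biUnion.2 ⟨s, hs, Finset.mem_image.2 ⟨j, ?_, rfl⟩⟩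
          rw [Finset.mem_Icc]
          refine ⟨?_, by omega⟩
          by_contra hlt
          apply h
          have := (hm2 s hs0).mul_left (tz f j)
          rw [← tz_add] at this
          exact (tz_anti f (by omega)).trans this
    | zero => intro _; exact ⟨∅, by simp, 0, zero_le _, by simp⟩
    | add x y _ _ hx hy =>
      intro h
      obtain ⟨V, hV, z, hz, rfl⟩ := hx fun k => h (k.trans (le_add_left hidem _ _))
      obtain ⟨W, hW, w, hw, rfl⟩ := hy fun k => h (k.trans (le_add_right hidem _ _))
      refine ⟨V ∪ W, Finset.union_subset hV hW, z + w, hz.add hw, ?_⟩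
      rw [sum_union hidem]
      abel
  obtain ⟨V, hV, z, hz, e⟩ := key h2
  simp only [Finset.coe_image, Set.mem_image, Finset.mem_coe, Finset.mem_powerset]
  refine ⟨V, hV, ?_⟩
  have : z + 1 = 1 := hz
  calc ∑ v ∈ V, v + 1 = ∑ v ∈ V, v + (z + 1) := by rw [this]
    _ = 1 + x := by rw [e]; abel
    _ = x := h1

lemma total (hidem : ∀ x : D, x + x = x)
    (hfin : ∃ S : Finset D, ∀ x : D,
      x ∈ AddSubmonoid.closure {y : D | ∃ a : Tropical (WithTop ℤ), ∃ s ∈ S, y = f a * s})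
    (x y : D) : le x y ∨ le y x := by
  by_cases hx : x = 0
  · left; rw [hx]; exact zero_le _
  by_cases hy : y = 0
  · right; rw [hy]; exact zero_le _
  have hs : x + y ≠ 0 := by
    intro h
    have h1 := le_add_left hidem x y
    rw [h] at h1
    exact hx (h1.antisymm (zero_le x))
  set p := (x + y)⁻¹ * x with hp
  set q := (x + y)⁻¹ * y with hq
  have hpq : p + q = 1 := by rw [hp, hq, ← mul_add, inv_mul_cancel₀ hs]
  have hp0 : p ≠ 0 := mul_ne_zero (inv_ne_zero hs) hx
  have hq0 : q ≠ 0 := mul_ne_zero (inv_ne_zero hs) hy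
  have hp1 : le p 1 := by rw [← hpq]; exact le_add_left hidem _ _
  have e1 : q = 1 → le x y := by
    intro h
    rw [hq, inv_mul_eq_one₀ hs] at h
    exact h
  have e2 : p = 1 → le y x := by
    intro h
    rw [hp, inv_mul_eq_one₀ hs] at h
    unfold le
    rw [add_comm, h]
  by_cases hex : ∃ n : ℕ, le (p ^ n) (tz f 1)
  · left
    obtain ⟨n, hn⟩ := hex
    apply e1
    obtain ⟨m, hm⟩ := bound' f hidem hfin q hq0
    have h1 := hn.pow hidem m
    rw [← tz_mul, mul_one, ← pow_mul] at h1
    have h2 := h1.trans hm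
    rw [← pow_add_eq_one hidem hpq (n * m)]
    exact h2.symm
  · right
    apply e2
    have h1 := le_inv hp0 hp1
    rw [← inv_eq_one]
    refine eq_one_of_finite hidem h1 (finite_A f hidem hfin) fun n => ⟨one_le_pow hidem h1 n, ?_⟩
    intro h
    apply hex
    refine ⟨n, ?_⟩
    have h3 := (h.mul_right (p ^ n)).mul_left (tz f 1)
    rw [inv_pow, inv_mul_cancel₀ (pow_ne_zero _ hp0), ← mul_assoc, ← tz_add] at h3
    simpa [tz_zero] using h3

end main

end DivSA

open DivSA in
/-- Every finite division semialgebra over `ℤ_max` is `F^(n)` for some positive integer `n`: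
if `D` is a division semiring with idempotent addition and `f : ℤ_max →+* D` an injective
semiring homomorphism with central range making `D` a finitely generated left semimodule over
`ℤ_max`, then `D` is commutative and there is a semiring isomorphism
`φ : D ≃+* ℤ_max` with `φ (f (trop a)) = trop (n * a)` for all `a : ℤ`. -/
theorem classification_of_finite_division_semialgebras {D : Type*} [DivisionSemiring D]
    (hidem : ∀ x : D, x + x = x)
    (f : Tropical (WithTop ℤ) →+* D) (hf : Function.Injective f)
    (hcentral : ∀ a : Tropical (WithTop ℤ), f a ∈ Set.center D)
    (hfin : ∃ S : Finset D, ∀ x : D,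
      x ∈ AddSubmonoid.closure {y : D | ∃ a : Tropical (WithTop ℤ), ∃ s ∈ S, y = f a * s}) :
    (∀ x y : D, x * y = y * x) ∧
      ∃ (n : ℕ) (φ : D ≃+* Tropical (WithTop ℤ)), 0 < n ∧
        ∀ a : ℤ, φ (f (trop (a : WithTop ℤ))) = trop (((n : ℤ) * a : ℤ) : WithTop ℤ) := by
  have htot := total f hidem hfin
  have hfinA := finite_A f hidem hfin
  have ht1 : le 1 (tz f (-1)) := by
    rw [← tz_zero f]; exact tz_anti f (by omega)
  have htne : tz f (-1) ≠ 1 := by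
    rw [← tz_zero f]
    intro h
    have := hf h
    rw [trop_inj_iff] at this
    exact absurd (WithTop.coe_injective this) (by decide)
  obtain ⟨g, ⟨hg1, hgne, hgt⟩, hgmin⟩ := exists_least hidem htot
    (A := {x : D | le 1 x ∧ x ≠ 1 ∧ le x (tz f (-1))})
    ((hfinA.insert (tz f (-1))).subset (by
      rintro x ⟨h1, -, h3⟩
      by_cases h : le (tz f (-1)) x
      · left; exact h3.antisymm h
      · right; exact ⟨h1, h⟩)) ⟨_, ht1, htne, hidem _⟩
  have hgmin' : ∀ x, le 1 x → x ≠ 1 → le g x := by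
    intro x h1 h2
    rcases htot x (tz f (-1)) with h | h
    · exact hgmin x ⟨h1, h2, h⟩
    · exact hgt.trans h
  have hg0 := ne_zero_of_one_le hg1
  have harch : ∀ x : D, ∃ n : ℕ, le x (g ^ n) := by
    intro x
    have : ∃ n : ℕ, le (tz f (-1)) (g ^ n) := by
      by_contra! hcon
      exact hgne (eq_one_of_finite hidem hg1 hfinA fun n => ⟨one_le_pow hidem hg1 n, hcon n⟩)
    obtain ⟨n, hn⟩ := this
    obtain ⟨m, hm⟩ := bound f hidem hfin x
    refine ⟨n * m, hm.trans ?_⟩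
    have := hn.pow hidem m
    rw [← tz_mul, ← pow_mul] at this
    simpa using this
  have hpos : ∀ x : D, le 1 x → ∃ n : ℕ, x = g ^ n := by
    classical
    intro x hx
    have hle := Nat.find_spec (harch x)
    have hmin := fun k => Nat.find_min (harch x) (m := k)
    generalize Nat.find (harch x) = n at hle hmin
    refine ⟨n, hle.antisymm ?_⟩
    cases n with
    | zero => simpa using hx
    | succ k =>
      have h1 := hmin k (by omega)
      have h2 : le (g ^ k) x := (htot _ _).resolve_left h1
      have hk0 : g ^ k ≠ 0 := pow_ne_zero _ hg0
      have h3 := h2.mul_left (g ^ k)⁻¹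
      rw [inv_mul_cancel₀ hk0] at h3
      have h4 := hgmin' _ h3 (by
        intro h
        rw [inv_mul_eq_one₀ hk0] at h
        exact h1 (h ▸ hidem x))
      have h5 := h4.mul_left (g ^ k)
      rwa [mul_inv_cancel_left₀ hk0, ← pow_succ] at h5
  set h := g⁻¹ with hh
  have hh0 : h ≠ 0 := inv_ne_zero hg0
  have hh1 : le h 1 := inv_le hg0 hg1
  have hsurj : ∀ x : D, x ≠ 0 → ∃ n : ℤ, x = h ^ n := by
    intro x hx
    rcases htot 1 x with k | k
    · obtain ⟨n, rfl⟩ := hpos x k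
      exact ⟨-n, by rw [hh]; simp⟩
    · obtain ⟨n, hn⟩ := hpos _ (le_inv hx k)
      exact ⟨n, by rw [hh, zpow_natCast, inv_pow, ← hn, inv_inv]⟩
  have hanti : ∀ i j : ℤ, i ≤ j → le (h ^ j) (h ^ i) := by
    intro i j hij
    obtain ⟨k, rfl⟩ := Int.le.dest hij
    have := (hh1.pow hidem k).mul_left (h ^ i)
    rw [zpow_add₀ hh0, zpow_natCast]
    simpa using this
  have hlt : ∀ i j : ℤ, i < j → h ^ i ≠ h ^ j := by
    intro i j hij e
    obtain ⟨k, rfl⟩ := Int.le.dest hij.le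
    rw [zpow_add₀ hh0, zpow_natCast] at e
    have e2 := (mul_right_eq_self₀.1 e.symm).resolve_right (zpow_ne_zero _ hh0)
    rw [hh, inv_pow, inv_eq_one] at e2
    exact hgne (eq_one_of_pow hidem hg1 (by omega) e2)
  have hinj : ∀ i j : ℤ, h ^ i = h ^ j → i = j := by
    intro i j e
    rcases lt_trichotomy i j with k | k | k
    · exact absurd e (hlt _ _ k)
    · exact k
    · exact absurd e.symm (hlt _ _ k)
  have hmin : ∀ a b : WithTop ℤ, a ≤ b → psi h a + psi h b = psi h a := by
    intro a b hab
    induction b using WithTop.recTopCoe with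
    | top => rw [psi_top, add_zero]
    | coe j =>
      induction a using WithTop.recTopCoe with
      | top => simp at hab
      | coe i =>
        rw [psi_coe, psi_coe, add_comm]
        exact hanti i j (by exact_mod_cast hab)
  let ψ : Tropical (WithTop ℤ) →+* D :=
    { toFun := fun x => psi h (untrop x)
      map_one' := by
        change psi h ((0 : ℤ) : WithTop ℤ) = 1
        rw [psi_coe, zpow_zero]
      map_zero' := rfl
      map_mul' := by
        intro x y
        rw [untrop_mul]
        generalize untrop x = a
        generalize untrop y = b
        induction a using WithTop.recTopCoe with
        | top => rw [top_add, psi_top, zero_mul]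
        | coe i =>
          induction b using WithTop.recTopCoe with
          | top => rw [add_top, psi_top, mul_zero]
          | coe j => rw [← WithTop.coe_add, psi_coe, psi_coe, psi_coe, zpow_add₀ hh0]
      map_add' := by
        intro x y
        rw [untrop_add]
        rcases le_total (untrop x) (untrop y) with k | k
        · rw [min_eq_left k, hmin _ _ k]
        · rw [min_eq_right k, add_comm, hmin _ _ k] }
  have hψ : ∀ n : ℤ, ψ (trop (n : WithTop ℤ)) = h ^ n := fun n => rfl
  have hbij : Function.Bijective ψ := by
    constructor
    · intro x y e
      apply untrop_injective
      change psi h (untrop x) = psi h (untrop y) at e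
      generalize untrop x = a at e
      generalize untrop y = b at e
      induction a using WithTop.recTopCoe with
      | top =>
        induction b using WithTop.recTopCoe with
        | top => rfl
        | coe j => exact absurd e.symm (zpow_ne_zero _ hh0)
      | coe i =>
        induction b using WithTop.recTopCoe with
        | top => exact absurd e (zpow_ne_zero _ hh0)
        | coe j => rw [hinj i j e]
    · intro x
      by_cases hx : x = 0
      · exact ⟨0, by rw [map_zero, hx]⟩
      · obtain ⟨n, rfl⟩ := hsurj x hx
        exact ⟨_, hψ n⟩
  refine ⟨?_, ?_⟩
  · intro x y
    obtain ⟨a, rfl⟩ := hbij.2 x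
    obtain ⟨b, rfl⟩ := hbij.2 y
    rw [← map_mul, mul_comm, map_mul]
  · obtain ⟨n, hn⟩ := hpos _ ht1
    have hn0 : 0 < n := by
      rcases Nat.eq_zero_or_pos n with k | k
      · rw [k, pow_zero] at hn; exact absurd hn htne
      · exact k
    refine ⟨n, (RingEquiv.ofBijective ψ hbij).symm, hn0, ?_⟩
    intro a
    rw [RingEquiv.symm_apply_eq]
    change tz f a = ψ (trop (((n : ℤ) * a : ℤ) : WithTop ℤ))
    rw [hψ, tz_zpow, zpow_mul]
    congr 1
    rw [zpow_natCast, hh, inv_pow, ← hn]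
    refine eq_inv_of_mul_eq_one_left ?_
    rw [← tz_add]; simp [tz_zero]
end
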